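/- Suppose the market input (X_p, 𝒫, 𝔓) admits no weak free lunch with vanishing risk and let μ₁,…,μ_n be defined by μ_i([0, K]) = p_i′(K). Assume G : ℝ₊^n → [−∞, ∞) is upper semi-continuous and, for every M > 1, the function G_M(s₁,…,s_n) := G(s₁,…,s_n) − (s₁ + … + s_n)/M is bounded from above. Then the put-based superhedging price equals the supremum over calibrated supermartingale models: V^{(p)}_{μ,𝔓}(G) = sup_{ℙ ∈ M⁻_{μ,𝔓}} E_ℙ[G]. -/

import Mathlib

open MeasureTheory Set Filter Topology
open scoped ENNReal NNReal Classical

noncomputable section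

namespace RobustFin

/-- Canonical path space: the values `S₀, S₁, …, S_n` of the asset. -/
abbrev Path (n : ℕ) := Fin (n + 1) → ℝ

/-- Paths starting at `s₀` with nonnegative coordinates: the canonical space `Ω`. -/
def Omega (n : ℕ) (s₀ : ℝ) : Set (Path n) := {ω | ω 0 = s₀ ∧ ∀ i, 0 ≤ ω i}

/-- The first `j` coordinates `S₁, …, S_j` of a path. -/
def restr {n : ℕ} (j : Fin n) (ω : Path n) : Fin j → ℝ :=
  fun i => ω ⟨(i : ℕ) + 1, by have h1 := i.isLt; have h2 := j.isLt; omega⟩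

/-- The coordinates `S₁, …, S_n` of a path. -/
def tailCoords {n : ℕ} (ω : Path n) : Fin n → ℝ := fun i => ω i.succ

/-- A dynamic trading strategy: bounded measurable positions `Δ_j(S₁,…,S_j)`. -/
structure Dyn (n : ℕ) where
  pos : (j : Fin n) → (Fin j → ℝ) → ℝ
  meas : ∀ j, Measurable (pos j)
  bdd : ∀ j, ∃ C, ∀ x, |pos j x| ≤ C

/-- No short selling: all dynamic positions are nonnegative. -/
def Dyn.Nonneg {n : ℕ} (D : Dyn n) : Prop := ∀ j x, 0 ≤ D.pos j x

/-- Gains from dynamic trading: `Σ_j Δ_j(S₁,…,S_j)(S_{j+1} − S_j)`. -/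
def Dyn.gains {n : ℕ} (D : Dyn n) (ω : Path n) : ℝ :=
  ∑ j : Fin n, D.pos j (restr j ω) * (ω j.succ - ω j.castSucc)

/-- A static option portfolio: a constant (cash) position plus a finite linear
combination of options with maturity indices `idx` and nonnegative strikes. -/
structure Static (n : ℕ) where
  const : ℝ
  m : ℕ
  coeff : Fin m → ℝ
  idx : Fin m → Fin n
  strike : Fin m → ℝ
  strike_nonneg : ∀ k, 0 ≤ strike k

/-- Payoff of the portfolio when the options are call options. -/
def Static.callPayoff {n : ℕ} (X : Static n) (ω : Path n) : ℝ :=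
  X.const + ∑ k, X.coeff k * max (ω (X.idx k).succ - X.strike k) 0

/-- Payoff of the portfolio when the options are put options. -/
def Static.putPayoff {n : ℕ} (X : Static n) (ω : Path n) : ℝ :=
  X.const + ∑ k, X.coeff k * max (X.strike k - ω (X.idx k).succ) 0

/-- Price of a static portfolio, given the unit option prices `c i K`;
this is the (unique) linear pricing functional determined by the prices. -/
def Static.price {n : ℕ} (X : Static n) (c : Fin n → ℝ → ℝ) : ℝ :=
  X.const + ∑ k, X.coeff k * c (X.idx k) (X.strike k)

/-- Expectation of a real payoff, valued in `EReal`, with the convention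
`∞ − ∞ = −∞` (in `EReal`, `⊤ - ⊤ = ⊥`). -/
def eexp {n : ℕ} (P : Measure (Path n)) (f : Path n → ℝ) : EReal :=
  ((∫⁻ ω, ENNReal.ofReal (f ω) ∂P : ℝ≥0∞) : EReal) -
    ((∫⁻ ω, ENNReal.ofReal (-(f ω)) ∂P : ℝ≥0∞) : EReal)

/-- The positive part of an extended real number, in `ℝ≥0∞`. -/
def posE (x : EReal) : ℝ≥0∞ := if x = ⊤ then ⊤ else ENNReal.ofReal x.toReal

/-- Expectation of an `EReal`-valued payoff, with the convention `∞ − ∞ = −∞`. -/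
def eexpE {n : ℕ} (P : Measure (Path n)) (f : Path n → EReal) : EReal :=
  ((∫⁻ ω, posE (f ω) ∂P : ℝ≥0∞) : EReal) - ((∫⁻ ω, posE (-(f ω)) ∂P : ℝ≥0∞) : EReal)

/-- A market calibrated model for the market with static payoffs `pay` (calls or puts),
prices `c` and prediction set `P`. -/
def Calibrated {n : ℕ} (pay : Static n → Path n → ℝ) (c : Fin n → ℝ → ℝ)
    (P : Set (Path n)) (Q : Measure (Path n)) : Prop :=
  IsProbabilityMeasure Q ∧ Q P = 1 ∧
    ∀ (X : Static n) (D : Dyn n), D.Nonneg →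
      eexp Q (fun ω => pay X ω + D.gains ω) ≤ (X.price c : EReal)

/-- A weak free lunch with vanishing risk. -/
def WFLVR {n : ℕ} (pay : Static n → Path n → ℝ) (c : Fin n → ℝ → ℝ)
    (P : Set (Path n)) : Prop :=
  ∃ (Xs : ℕ → Static n) (Ds : ℕ → Dyn n) (X : Static n) (D : Dyn n) (L : ℝ),
    (∀ k, (Ds k).Nonneg) ∧ D.Nonneg ∧
    (∀ ω ∈ P, Tendsto (fun k => pay (Xs k) ω + (Ds k).gains ω) atTop (nhds 0)) ∧
    (∀ k, ∀ ω ∈ P, pay X ω + D.gains ω ≤ pay (Xs k) ω + (Ds k).gains ω) ∧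
    Tendsto (fun k => (Xs k).price c) atTop (nhds L) ∧ L < 0

/-- A robust uniformly strong arbitrage. -/
def RobustArbitrage {n : ℕ} (pay : Static n → Path n → ℝ) (c : Fin n → ℝ → ℝ)
    (P : Set (Path n)) : Prop :=
  ∃ (X : Static n) (D : Dyn n), D.Nonneg ∧ X.price c < 0 ∧
    ∀ ω ∈ P, 0 ≤ pay X ω + D.gains ω

/-- The superhedging price of `G` over semi-static strategies (no short selling). -/
def V {n : ℕ} (pay : Static n → Path n → ℝ) (c : Fin n → ℝ → ℝ)
    (P : Set (Path n)) (G : Path n → EReal) : EReal :=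
  sInf {q : EReal | ∃ (X : Static n) (D : Dyn n), D.Nonneg ∧ q = (X.price c : EReal) ∧
    ∀ ω ∈ P, G ω ≤ ((pay X ω + D.gains ω : ℝ) : EReal)}

/-- The superhedging price of `G` when the dynamic positions may take both signs. -/
def Vsigned {n : ℕ} (pay : Static n → Path n → ℝ) (c : Fin n → ℝ → ℝ)
    (P : Set (Path n)) (G : Path n → EReal) : EReal :=
  sInf {q : EReal | ∃ (X : Static n) (D : Dyn n), q = (X.price c : EReal) ∧
    ∀ ω ∈ P, G ω ≤ ((pay X ω + D.gains ω : ℝ) : EReal)}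

/-- `Π_μ`: probability measures on the path space with marginals `δ_{s₀}, μ₁, …, μ_n`. -/
def PiMu {n : ℕ} (s₀ : ℝ) (μ : Fin n → Measure ℝ) : Set (Measure (Path n)) :=
  {π | IsProbabilityMeasure π ∧ π (Omega n s₀) = 1 ∧
       ∀ i : Fin n, π.map (fun ω => ω i.succ) = μ i}

/-- The coordinate process is a supermartingale in its natural filtration:
for every Borel `A ⊆ ℝ₊^j`, `∫ 1_A(S₁,…,S_j)(S_{j+1} − S_j) dπ ≤ 0`. -/
def IsSupermartingaleLaw {n : ℕ} (π : Measure (Path n)) : Prop :=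
  ∀ (j : Fin n) (A : Set (Fin j → ℝ)), MeasurableSet A →
    ∫ ω, Set.indicator A (fun _ => (1 : ℝ)) (restr j ω) * (ω j.succ - ω j.castSucc) ∂π ≤ 0

/-- `M⁻_μ`: calibrated supermartingale measures. -/
def MSet {n : ℕ} (s₀ : ℝ) (μ : Fin n → Measure ℝ) : Set (Measure (Path n)) :=
  {π ∈ PiMu s₀ μ | IsSupermartingaleLaw π}

/-- `M⁻_{μ,𝔓}`: calibrated supermartingale measures giving full mass to `P`. -/
def MSetP {n : ℕ} (s₀ : ℝ) (μ : Fin n → Measure ℝ) (P : Set (Path n)) :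
    Set (Measure (Path n)) :=
  {π ∈ MSet s₀ μ | π P = 1}

/-- Assumption A on the marginals. -/
def AssumptionA {n : ℕ} (s₀ : ℝ) (μ : Fin n → Measure ℝ) : Prop :=
  (∀ i, ∫ x, x ∂(μ i) ≤ s₀) ∧
  (∀ i j : Fin n, i ≤ j → ∫ x, x ∂(μ j) ≤ ∫ x, x ∂(μ i)) ∧
  (∀ φ : ℝ → ℝ, ConcaveOn ℝ Set.univ φ → Monotone φ → (∀ x, 0 ≤ φ x) →
    ∀ i j : Fin n, i ≤ j → ∫ x, φ x ∂(μ j) ≤ ∫ x, φ x ∂(μ i))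

/-- Condition C (i): each `c_i` is nonnegative, convex and nonincreasing on `ℝ₊`. -/
def CondC1 {n : ℕ} (c : Fin n → ℝ → ℝ) : Prop :=
  ∀ i, (∀ x, 0 ≤ x → 0 ≤ c i x) ∧ ConvexOn ℝ (Set.Ici 0) (c i) ∧ AntitoneOn (c i) (Set.Ici 0)

/-- Condition C (ii): `s₀ ≥ c₁(0) ≥ … ≥ c_n(0) ≥ 0` and `c_i'(0+) ≥ −1`
(the latter expressed, for convex `c_i`, through the slopes at `0`). -/
def CondC2 {n : ℕ} (s₀ : ℝ) (c : Fin n → ℝ → ℝ) : Prop :=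
  (∀ i, c i 0 ≤ s₀) ∧ (∀ i j : Fin n, i ≤ j → c j 0 ≤ c i 0) ∧ (∀ i, 0 ≤ c i 0) ∧
    (∀ i, ∀ K : ℝ, 0 < K → c i 0 - K ≤ c i K)

/-- Condition C (iii): `c_i(K) → 0` as `K → ∞`. -/
def CondC3 {n : ℕ} (c : Fin n → ℝ → ℝ) : Prop :=
  ∀ i, Tendsto (c i) atTop (nhds 0)

/-- Condition C (iv): for every `x ≥ 0`, `c_i(0) − c_i(x)` is nonincreasing in `i`. -/
def CondC4 {n : ℕ} (c : Fin n → ℝ → ℝ) : Prop :=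
  ∀ x : ℝ, 0 ≤ x → ∀ i j : Fin n, i ≤ j → c j 0 - c j x ≤ c i 0 - c i x

/-- Condition C. -/
def CondC {n : ℕ} (s₀ : ℝ) (c : Fin n → ℝ → ℝ) : Prop :=
  CondC1 c ∧ CondC2 s₀ c ∧ CondC3 c ∧ CondC4 c

/-- Condition P (i). -/
def CondP1 {n : ℕ} (p : Fin n → ℝ → ℝ) : Prop :=
  ∀ i, (∀ x, 0 ≤ x → 0 ≤ p i x) ∧ ConvexOn ℝ (Set.Ici 0) (p i) ∧ MonotoneOn (p i) (Set.Ici 0)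

/-- Condition P (ii): `s₀ ≥ lim (x − p₁(x)) ≥ … ≥ 0` and `0 ≤ p_i'(0+) ≤ 1`. -/
def CondP2 {n : ℕ} (s₀ : ℝ) (p : Fin n → ℝ → ℝ) : Prop :=
  (∃ L : Fin n → ℝ,
    (∀ i, Tendsto (fun x => x - p i x) atTop (nhds (L i))) ∧
    (∀ i, L i ≤ s₀) ∧ (∀ i j : Fin n, i ≤ j → L j ≤ L i) ∧ (∀ i, 0 ≤ L i)) ∧
  (∃ d : Fin n → ℝ,
    (∀ i, Tendsto (fun K => (p i K - p i 0) / K) (nhdsWithin 0 (Set.Ioi 0)) (nhds (d i))) ∧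
    (∀ i, 0 ≤ d i ∧ d i ≤ 1))

/-- Condition P (iii): `p_i(K) → 0` as `K → 0` (within `ℝ₊`). -/
def CondP3 {n : ℕ} (p : Fin n → ℝ → ℝ) : Prop :=
  ∀ i, Tendsto (p i) (nhdsWithin 0 (Set.Ici 0)) (nhds 0)

/-- Condition P (iv): `p_i(x)` is nondecreasing in `i`. -/
def CondP4 {n : ℕ} (p : Fin n → ℝ → ℝ) : Prop :=
  ∀ x : ℝ, 0 ≤ x → ∀ i j : Fin n, i ≤ j → p i x ≤ p j x

/-- Condition P. -/
def CondP {n : ℕ} (s₀ : ℝ) (p : Fin n → ℝ → ℝ) : Prop :=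
  CondP1 p ∧ CondP2 s₀ p ∧ CondP3 p ∧ CondP4 p

/-- The measures `μ_i` defined from the put prices by `μ_i([0,K]) = p_i'(K)`;
equivalently, `p_i(K) = ∫ (K − x)⁺ μ_i(dx)`. -/
def PutPricesFrom {n : ℕ} (p : Fin n → ℝ → ℝ) (μ : Fin n → Measure ℝ) : Prop :=
  (∀ i, IsProbabilityMeasure (μ i)) ∧ (∀ i, μ i (Set.Iio 0) = 0) ∧
  (∀ i, Integrable (fun x => x) (μ i)) ∧
  (∀ i, ∀ K : ℝ, 0 ≤ K → p i K = ∫ x, max (K - x) 0 ∂(μ i))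

/-- The path `(s₀, s₁, …, s_i, x, s_{i+2}, …, s_n)`. -/
def mkPath {n : ℕ} (s₀ : ℝ) (i : Fin n) (s : Fin i → ℝ) (x : ℝ)
    (t : Fin (n - ((i : ℕ) + 1)) → ℝ) : Path n := fun j =>
  if h0 : (j : ℕ) = 0 then s₀
  else if h1 : (j : ℕ) ≤ (i : ℕ) then
    s ⟨(j : ℕ) - 1, by have := j.isLt; have := i.isLt; omega⟩
  else if h2 : (j : ℕ) = (i : ℕ) + 1 then x
  else t ⟨(j : ℕ) - (i : ℕ) - 2, by have := j.isLt; have := i.isLt; omega⟩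

/-- The family `β_i : ℝ₊^i → ℝ` defined recursively by `β_n = 0` and
`β_i(s₁,…,s_i) = (sup_{s_{i+2},…,s_n} limsup_{x→∞} ((β_{i+1}(s₁,…,s_i,x)
 + G(s₁,…,s_i,x,s_{i+2},…,s_n)/x)·1_𝔓)) ∨ 0`. -/
def IsBetaFamily {n : ℕ} (s₀ : ℝ) (P : Set (Path n)) (G : (Fin n → ℝ) → EReal)
    (β : (i : Fin (n + 1)) → (Fin i → ℝ) → ℝ) : Prop :=
  (∀ s, β (Fin.last n) s = 0) ∧
  ∀ (i : Fin n) (s : Fin i → ℝ), (∀ k, 0 ≤ s k) →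
    (β ⟨(i : ℕ), by have := i.isLt; omega⟩ s : EReal) =
      max 0 (⨆ (t : Fin (n - ((i : ℕ) + 1)) → ℝ) (_ : ∀ k, 0 ≤ t k),
        Filter.limsup (fun x : ℝ =>
          if mkPath s₀ i s x t ∈ P then
            ((β ⟨(i : ℕ) + 1, by have := i.isLt; omega⟩ (Fin.snoc s x) : ℝ) : EReal)
              + G (tailCoords (mkPath s₀ i s x t)) * ((x⁻¹ : ℝ) : EReal)
          else 0) Filter.atTop)

/-- Gains of the dynamic strategy `(β_i)`: `β₀(S₁ − s₀) + Σ_i β_i(S₁,…,S_i)(S_{i+1} − S_i)`. -/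
def gainsOf {n : ℕ} (β : (i : Fin (n + 1)) → (Fin i → ℝ) → ℝ) (ω : Path n) : ℝ :=
  ∑ j : Fin n, β ⟨(j : ℕ), by have := j.isLt; omega⟩ (restr j ω) * (ω j.succ - ω j.castSucc)

/-- The penalty function `λ_𝔓(s₁,…,s_n) = (1 + s₁ + … + s_n)·1{(s₁,…,s_n) ∉ 𝔓}`. -/
def lambdaP {n : ℕ} (P : Set (Path n)) (ω : Path n) : ℝ :=
  if ω ∈ P then 0 else 1 + ∑ i : Fin n, ω i.succ

/-- `min(s₀, s₁, …, s_m)`. -/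
def pmin {m : ℕ} (s₀ : ℝ) (s : Fin m → ℝ) : ℝ :=
  Finset.univ.inf' Finset.univ_nonempty
    (fun j : Fin (m + 1) =>
      if h : (j : ℕ) = 0 then s₀ else s ⟨(j : ℕ) - 1, by have := j.isLt; omega⟩)

/-- `max(s₀, s₁, …, s_m)`. -/
def pmax {m : ℕ} (s₀ : ℝ) (s : Fin m → ℝ) : ℝ :=
  Finset.univ.sup' Finset.univ_nonempty
    (fun j : Fin (m + 1) =>
      if h : (j : ℕ) = 0 then s₀ else s ⟨(j : ℕ) - 1, by have := j.isLt; omega⟩)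


/-! ### Hedging calculus -/

/-- `f` can be superhedged on `P` at price `r`. -/
def Hedge {n : ℕ} (P : Set (Path n)) (p : Fin n → ℝ → ℝ) (f : Path n → ℝ) (r : ℝ) : Prop :=
  ∃ (X : Static n) (D : Dyn n), D.Nonneg ∧ X.price p = r ∧
    ∀ ω ∈ P, f ω ≤ X.putPayoff ω + D.gains ω

/-- Zero dynamic strategy. -/
def zeroDyn (n : ℕ) : Dyn n := ⟨fun _ _ => 0, fun _ => measurable_const, fun _ => ⟨0, by simp⟩⟩

lemma zeroDyn_gains {n : ℕ} (ω : Path n) : (zeroDyn n).gains ω = 0 := by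
  simp [zeroDyn, Dyn.gains]

/-- A pure cash position. -/
def cash (n : ℕ) (c : ℝ) : Static n := ⟨c, 0, Fin.elim0, Fin.elim0, Fin.elim0, fun k => k.elim0⟩

lemma cash_price {n : ℕ} (c : ℝ) (p : Fin n → ℝ → ℝ) : (cash n c).price p = c := by
  change c + ∑ k : Fin 0, _ = c
  rw [Fin.sum_univ_zero, add_zero]

lemma cash_putPayoff {n : ℕ} (c : ℝ) (ω : Path n) : (cash n c).putPayoff ω = c := by
  change c + ∑ k : Fin 0, _ = c
  rw [Fin.sum_univ_zero, add_zero]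

/-- A position of `c` puts. -/
def onePut {n : ℕ} (c : ℝ) (i : Fin n) (K : ℝ) (hK : 0 ≤ K) : Static n :=
  ⟨0, 1, fun _ => c, fun _ => i, fun _ => K, fun _ => hK⟩

lemma onePut_price {n : ℕ} (c : ℝ) (i : Fin n) (K : ℝ) (hK : 0 ≤ K) (p : Fin n → ℝ → ℝ) :
    (onePut c i K hK).price p = c * p i K := by
  change 0 + ∑ k : Fin 1, c * p i K = c * p i K
  simp

lemma onePut_putPayoff {n : ℕ} (c : ℝ) (i : Fin n) (K : ℝ) (hK : 0 ≤ K) (ω : Path n) :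
    (onePut c i K hK).putPayoff ω = c * max (K - ω i.succ) 0 := by
  change 0 + ∑ k : Fin 1, c * max (K - ω i.succ) 0 = _
  simp

/-- Sum of static positions. -/
def Static.plus {n : ℕ} (X Y : Static n) : Static n where
  const := X.const + Y.const
  m := X.m + Y.m
  coeff := Fin.append X.coeff Y.coeff
  idx := Fin.append X.idx Y.idx
  strike := Fin.append X.strike Y.strike
  strike_nonneg := by
    intro k
    refine Fin.addCases (fun i => ?_) (fun i => ?_) k
    · simpa using X.strike_nonneg i
    · simpa using Y.strike_nonneg i

lemma Static.plus_price {n : ℕ} (X Y : Static n) (c : Fin n → ℝ → ℝ) :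
    (X.plus Y).price c = X.price c + Y.price c := by
  change (X.const + Y.const) + ∑ k : Fin (X.m + Y.m), Fin.append X.coeff Y.coeff k *
    c (Fin.append X.idx Y.idx k) (Fin.append X.strike Y.strike k) = _
  rw [Fin.sum_univ_add]
  simp [Static.price]; ring

lemma Static.plus_putPayoff {n : ℕ} (X Y : Static n) (ω : Path n) :
    (X.plus Y).putPayoff ω = X.putPayoff ω + Y.putPayoff ω := by
  change (X.const + Y.const) + ∑ k : Fin (X.m + Y.m), Fin.append X.coeff Y.coeff k *
    max (Fin.append X.strike Y.strike k - ω (Fin.append X.idx Y.idx k).succ) 0 = _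
  rw [Fin.sum_univ_add]
  simp [Static.putPayoff]; ring

/-- Multiple of a static position. -/
def Static.times {n : ℕ} (t : ℝ) (X : Static n) : Static n :=
  { X with const := t * X.const, coeff := fun k => t * X.coeff k }

lemma Static.times_price {n : ℕ} (t : ℝ) (X : Static n) (c : Fin n → ℝ → ℝ) :
    (X.times t).price c = t * X.price c := by
  change t * X.const + ∑ k : Fin X.m, t * X.coeff k * c (X.idx k) (X.strike k) = _
  simp [Static.price, Finset.mul_sum, mul_add, mul_assoc]

lemma Static.times_putPayoff {n : ℕ} (t : ℝ) (X : Static n) (ω : Path n) :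
    (X.times t).putPayoff ω = t * X.putPayoff ω := by
  change t * X.const + ∑ k : Fin X.m, t * X.coeff k * max (X.strike k - ω (X.idx k).succ) 0 = _
  simp [Static.putPayoff, Finset.mul_sum, mul_add, mul_assoc]

/-- Sum of dynamic strategies. -/
def Dyn.plus {n : ℕ} (D D' : Dyn n) : Dyn n where
  pos := fun j x => D.pos j x + D'.pos j x
  meas := fun j => (D.meas j).add (D'.meas j)
  bdd := by
    intro j
    obtain ⟨C, hC⟩ := D.bdd j
    obtain ⟨C', hC'⟩ := D'.bdd j
    exact ⟨C + C', fun x => (abs_add_le _ _).trans (add_le_add (hC x) (hC' x))⟩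

lemma Dyn.plus_gains {n : ℕ} (D D' : Dyn n) (ω : Path n) :
    (D.plus D').gains ω = D.gains ω + D'.gains ω := by
  simp [Dyn.plus, Dyn.gains, add_mul, Finset.sum_add_distrib]

/-- Multiple of a dynamic strategy. -/
def Dyn.times {n : ℕ} (t : ℝ) (D : Dyn n) : Dyn n where
  pos := fun j x => t * D.pos j x
  meas := fun j => (D.meas j).const_mul t
  bdd := by
    intro j
    obtain ⟨C, hC⟩ := D.bdd j
    exact ⟨|t| * C, fun x => by
      rw [abs_mul]; exact mul_le_mul_of_nonneg_left (hC x) (abs_nonneg _)⟩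

lemma Dyn.times_gains {n : ℕ} (t : ℝ) (D : Dyn n) (ω : Path n) :
    (D.times t).gains ω = t * D.gains ω := by
  simp [Dyn.times, Dyn.gains, Finset.mul_sum, mul_assoc]

section HedgeLemmas

variable {n : ℕ} {P : Set (Path n)} {p : Fin n → ℝ → ℝ} {f g : Path n → ℝ} {r s : ℝ}

lemma Hedge.add (hf : Hedge P p f r) (hg : Hedge P p g s) :
    Hedge P p (fun ω => f ω + g ω) (r + s) := by
  obtain ⟨X, D, hD, rfl, h⟩ := hf
  obtain ⟨Y, D', hD', rfl, h'⟩ := hg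
  refine ⟨X.plus Y, D.plus D', fun j x => add_nonneg (hD j x) (hD' j x), X.plus_price Y p, ?_⟩
  intro ω hω
  have h1 := h ω hω
  have h2 := h' ω hω
  rw [Static.plus_putPayoff, Dyn.plus_gains]
  linarith

lemma Hedge.mul {t : ℝ} (ht : 0 ≤ t) (hf : Hedge P p f r) :
    Hedge P p (fun ω => t * f ω) (t * r) := by
  obtain ⟨X, D, hD, rfl, h⟩ := hf
  refine ⟨X.times t, D.times t, fun j x => mul_nonneg ht (hD j x), X.times_price t p, ?_⟩
  intro ω hω
  have h1 := mul_le_mul_of_nonneg_left (h ω hω) ht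
  rw [Static.times_putPayoff, Dyn.times_gains]
  linarith

lemma Hedge.mono (hf : Hedge P p f r) (hgf : ∀ ω ∈ P, g ω ≤ f ω) : Hedge P p g r := by
  obtain ⟨X, D, hD, rfl, h⟩ := hf
  exact ⟨X, D, hD, rfl, fun ω hω => (hgf ω hω).trans (h ω hω)⟩

lemma hedge_const (c : ℝ) : Hedge P p (fun _ => c) c := by
  refine ⟨cash n c, zeroDyn n, fun _ _ => le_rfl, cash_price _ _, ?_⟩
  intro ω _
  rw [zeroDyn_gains]
  rw [cash_putPayoff, add_zero]

lemma hedge_put (c : ℝ) (i : Fin n) {K : ℝ} (hK : 0 ≤ K) :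
    Hedge P p (fun ω => c * max (K - ω i.succ) 0) (c * p i K) := by
  refine ⟨onePut c i K hK, zeroDyn n, fun _ _ => le_rfl, onePut_price _ _ _ _ _, ?_⟩
  intro ω _
  rw [zeroDyn_gains]
  rw [onePut_putPayoff, add_zero]

lemma hedge_gain (j : Fin n) (φ : (Fin j → ℝ) → ℝ) (hφ : Measurable φ) (h0 : ∀ x, 0 ≤ φ x)
    (C : ℝ) (hC : ∀ x, φ x ≤ C) :
    Hedge P p (fun ω => φ (restr j ω) * (ω j.succ - ω j.castSucc)) 0 := by
  refine ⟨cash n 0, ⟨Function.update (fun _ _ => 0) j φ, ?_, ?_⟩, ?_, cash_price _ _,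
    ?_⟩
  · intro k
    by_cases hk : k = j
    · subst hk; simpa using hφ
    · rw [Function.update_of_ne hk]; exact measurable_const
  · intro k
    by_cases hk : k = j
    · subst hk
      exact ⟨C, fun x => by rw [Function.update_self, abs_of_nonneg (h0 x)]; exact hC x⟩
    · exact ⟨0, fun x => by rw [Function.update_of_ne hk]; simp⟩
  · intro k x
    by_cases hk : k = j
    · subst hk; simpa using h0 x
    · simp [Function.update_of_ne hk]
  · intro ω _
    rw [cash_putPayoff, zero_add, Dyn.gains]
    rw [Finset.sum_eq_single j]
    · simp
    · intro b _ hb; simp [Function.update_of_ne hb]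
    · simp

lemma hedge_coord {s₀ : ℝ} (hP : P ⊆ Omega n s₀) (i : Fin (n + 1)) :
    Hedge P p (fun ω => ω i) s₀ := by
  induction i using Fin.induction with
  | zero => exact (hedge_const s₀).mono fun ω hω => (hP hω).1.le
  | succ i ih =>
    have := ih.add (hedge_gain (P := P) (p := p) i (fun _ => 1) measurable_const (by simp) 1
      (by simp))
    rw [add_zero] at this
    exact this.mono fun ω _ => by simp

lemma hedge_finset_sum {s₀ : ℝ} (hP : P ⊆ Omega n s₀) (A : Finset (Fin (n + 1))) :
    Hedge P p (fun ω => ∑ i ∈ A, ω i) (A.card * s₀) := by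
  induction A using Finset.induction_on with
  | empty => simpa using hedge_const (P := P) (p := p) 0
  | insert a A ha ih =>
    have := (hedge_coord (p := p) hP a).add ih
    rw [Finset.card_insert_of_notMem ha]
    have e : ((A.card + 1 : ℕ) : ℝ) * s₀ = s₀ + A.card * s₀ := by push_cast; ring
    rw [e]
    exact this.mono fun ω _ => by rw [Finset.sum_insert ha]

lemma norm_le_sum_of_nonneg {ω : Path n} (h : ∀ i, 0 ≤ ω i) : ‖ω‖ ≤ ∑ i, ω i := by
  rw [pi_norm_le_iff_of_nonneg (Finset.sum_nonneg fun i _ => h i)]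
  intro i
  rw [Real.norm_of_nonneg (h i)]
  exact Finset.single_le_sum (f := ω) (fun i _ => h i) (Finset.mem_univ i)

lemma hedge_norm {s₀ : ℝ} (hP : P ⊆ Omega n s₀) :
    Hedge P p (fun ω => ‖ω‖) ((n + 1) * s₀) := by
  have := hedge_finset_sum (p := p) hP Finset.univ
  simp only [Finset.card_univ, Fintype.card_fin, Nat.cast_add, Nat.cast_one] at this
  exact this.mono fun ω hω => norm_le_sum_of_nonneg (hP hω).2

end HedgeLemmas

/-- Continuous functions of linear growth. -/
def LG (n : ℕ) : Submodule ℝ (Path n → ℝ) where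
  carrier := {f | Continuous f ∧ ∃ C : ℝ, ∀ ω, |f ω| ≤ C * (1 + ‖ω‖)}
  add_mem' := by
    rintro f g ⟨hf, C, hC⟩ ⟨hg, C', hC'⟩
    refine ⟨hf.add hg, C + C', fun ω => (abs_add_le _ _).trans ?_⟩
    rw [add_mul]; exact add_le_add (hC ω) (hC' ω)
  zero_mem' := ⟨continuous_const, 0, by simp⟩
  smul_mem' := by
    rintro c f ⟨hf, C, hC⟩
    refine ⟨hf.const_smul c, |c| * C, fun ω => ?_⟩
    simp only [Pi.smul_apply, smul_eq_mul, abs_mul, mul_assoc]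
    exact mul_le_mul_of_nonneg_left (hC ω) (abs_nonneg _)

lemma hedge_LG {n : ℕ} {P : Set (Path n)} {p : Fin n → ℝ → ℝ} {s₀ : ℝ} (hP : P ⊆ Omega n s₀)
    (f : Path n → ℝ) (C : ℝ) (hC : ∀ ω ∈ P, f ω ≤ C * (1 + ‖ω‖)) :
    ∃ r, Hedge P p f r := by
  refine ⟨_, (((hedge_const 1).add (hedge_norm (p := p) hP)).mul (abs_nonneg C)).mono ?_⟩
  intro ω hω
  refine (hC ω hω).trans (mul_le_mul_of_nonneg_right (le_abs_self C) (by positivity))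

/-- Hahn--Banach step. -/
lemma exists_functional {n : ℕ} {P : Set (Path n)} {p : Fin n → ℝ → ℝ} {s₀ : ℝ}
    (hP : P ⊆ Omega n s₀) (G : Path n → EReal)
    (hG : ∃ C : ℝ, ∀ ω ∈ P, G ω ≤ ((C * (1 + ‖ω‖) : ℝ) : EReal)) (v : ℝ)
    (hv : ∀ (f : Path n → ℝ) (r : ℝ), (∀ ω ∈ P, G ω ≤ (f ω : EReal)) → Hedge P p f r → v ≤ r) :
    ∃ ℓ : LG n →ₗ[ℝ] ℝ, (∀ (f : LG n) (r : ℝ), Hedge P p f.1 r → ℓ f ≤ r) ∧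
      ∀ f : LG n, (∀ ω ∈ P, G ω ≤ (f.1 ω : EReal)) → v ≤ ℓ f := by
  obtain ⟨C₀, hC₀⟩ := hG
  obtain ⟨r₀, hr₀⟩ := hedge_LG (p := p) hP (fun ω => C₀ * (1 + ‖ω‖)) C₀ (fun _ _ => le_rfl)
  -- no robust arbitrage
  have h0 : ∀ r, Hedge P p (fun _ => 0) r → 0 ≤ r := by
    intro r hr
    by_contra hneg
    push Not at hneg
    obtain ⟨N, hN⟩ := exists_nat_gt ((r₀ - v) / (-r))
    have h1 := hv _ _ hC₀ ((hr₀.add (hr.mul N.cast_nonneg)).mono (fun ω _ => by simp))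
    rw [div_lt_iff₀ (by linarith)] at hN
    linarith
  have ht : ∀ (t : ℝ) (a : Path n → ℝ) (r : ℝ), 0 ≤ t → (∀ ω ∈ P, G ω ≤ (a ω : EReal)) →
      Hedge P p (fun ω => t * a ω) r → t * v ≤ r := by
    intro t a r ht ha hr
    rcases ht.eq_or_lt with rfl | ht
    · simpa using h0 r (by simpa using hr)
    · have h1 := hv a (t⁻¹ * r) ha ((hr.mul (inv_nonneg.2 ht.le)).mono fun ω _ => by
        field_simp; exact le_rfl)
      have := mul_le_mul_of_nonneg_left h1 ht.le
      rwa [mul_inv_cancel_left₀ ht.ne'] at this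
  let T : LG n → Set ℝ := fun f => {r | ∃ (t : ℝ) (a : Path n → ℝ), 0 ≤ t ∧
    (∀ ω ∈ P, G ω ≤ (a ω : EReal)) ∧ Hedge P p (fun ω => f.1 ω + t * a ω) (r + t * v)}
  have Tof : ∀ (f : LG n) r, Hedge P p f.1 r → r ∈ T f := fun f r h =>
    ⟨0, _, le_rfl, hC₀, by simpa using h⟩
  have hedgeLG : ∀ f : LG n, ∃ r, Hedge P p f.1 r := by
    intro f
    obtain ⟨_, C, hC⟩ := f.2
    exact hedge_LG hP _ C fun ω _ => (le_abs_self _).trans (hC ω)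
  have Tne : ∀ f, (T f).Nonempty := fun f =>
    let ⟨r, hr⟩ := hedgeLG f
    ⟨r, Tof f r hr⟩
  have Tbdd : ∀ f, BddBelow (T f) := by
    intro f
    obtain ⟨c, hc⟩ := hedgeLG (-f)
    refine ⟨-c, ?_⟩
    rintro r ⟨t, a, h0t, ha, hh⟩
    have := ht t a _ h0t ha ((hh.add hc).mono fun ω _ => by simp)
    linarith
  have Tadd : ∀ f g r s, r ∈ T f → s ∈ T g → r + s ∈ T (f + g) := by
    rintro f g r s ⟨t, a, h0t, ha, hh⟩ ⟨t', a', h0t', ha', hh'⟩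
    refine ⟨t + t', fun ω => min (a ω) (a' ω), add_nonneg h0t h0t', ?_, ?_⟩
    · intro ω hω
      rcases min_choice (a ω) (a' ω) with h | h <;> simp only [h]
      exacts [ha ω hω, ha' ω hω]
    · have := hh.add hh'
      have e : r + t * v + (s + t' * v) = r + s + (t + t') * v := by ring
      rw [e] at this
      refine this.mono fun ω _ => ?_
      have h1 := mul_le_mul_of_nonneg_left (min_le_left (a ω) (a' ω)) h0t
      have h2 := mul_le_mul_of_nonneg_left (min_le_right (a ω) (a' ω)) h0t'
      have e2 : (f + g).1 ω = f.1 ω + g.1 ω := rfl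
      rw [e2]
      linarith
  have Tmul : ∀ (c : ℝ) f r, 0 < c → r ∈ T f → c * r ∈ T (c • f) := by
    rintro c f r hc ⟨t, a, h0t, ha, hh⟩
    refine ⟨c * t, a, by positivity, ha, ?_⟩
    have := hh.mul hc.le
    have e : c * (r + t * v) = c * r + c * t * v := by ring
    rw [e] at this
    refine this.mono fun ω _ => ?_
    have e2 : (c • f).1 ω = c * f.1 ω := rfl
    rw [e2]
    exact le_of_eq (by ring)
  let N : LG n → ℝ := fun f => sInf (T f)
  have Nle : ∀ (c : ℝ), 0 < c → ∀ f, N (c • f) ≤ c * N f := by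
    intro c hc f
    rw [← div_le_iff₀' hc]
    refine le_csInf (Tne f) fun r hr => ?_
    rw [div_le_iff₀' hc]
    exact csInf_le (Tbdd _) (Tmul c f r hc hr)
  have Nhom : ∀ c : ℝ, 0 < c → ∀ f, N (c • f) = c * N f := by
    intro c hc f
    refine le_antisymm (Nle c hc f) ?_
    have := Nle c⁻¹ (inv_pos.2 hc) (c • f)
    rw [inv_smul_smul₀ hc.ne'] at this
    have := mul_le_mul_of_nonneg_left this hc.le
    rwa [mul_inv_cancel_left₀ hc.ne'] at this
  have Nadd : ∀ f g, N (f + g) ≤ N f + N g := by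
    intro f g
    have h1 : ∀ s ∈ T g, N (f + g) - s ≤ N f := by
      intro s hs
      refine le_csInf (Tne f) fun r hr => ?_
      have := csInf_le (Tbdd _) (Tadd f g r s hr hs)
      change sInf (T (f + g)) - s ≤ r
      linarith
    have h2 : N (f + g) - N f ≤ N g := le_csInf (Tne g) fun s hs => by linarith [h1 s hs]
    linarith
  have N0 : N 0 = 0 := by
    have := Nhom 2 (by norm_num) 0
    rw [smul_zero] at this
    linarith
  obtain ⟨ℓ, -, hℓ⟩ := exists_extension_of_le_sublinear (⟨⊥, 0⟩ : LG n →ₗ.[ℝ] ℝ) N Nhom Nadd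
    (by
      rintro ⟨x, hx⟩
      have hx0 : x = 0 := by simpa using hx
      subst hx0
      simp [N0])
  refine ⟨ℓ, fun f r hr => (hℓ f).trans (csInf_le (Tbdd f) (Tof f r hr)), ?_⟩
  intro f hf
  have h1 : -v ∈ T (-f) := by
    refine ⟨1, f.1, zero_le_one, hf, ?_⟩
    have := hedge_const (P := P) (p := p) 0
    have e : -v + 1 * v = 0 := by ring
    rw [e]
    exact this.mono fun ω _ => by simp
  have h2 := (hℓ (-f)).trans (csInf_le (Tbdd _) h1)
  rw [map_neg] at h2
  linarith

/-! ### From functionals to measures -/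

lemma LG_of_bdd {n : ℕ} {f : Path n → ℝ} (hf : Continuous f) (C : ℝ) (hC : ∀ ω, |f ω| ≤ C) :
    f ∈ LG n := by
  refine ⟨hf, C, fun ω => (hC ω).trans ?_⟩
  have : 0 ≤ C := (abs_nonneg _).trans (hC ω)
  nlinarith [norm_nonneg ω]

lemma LG_one (n : ℕ) : (fun _ => 1 : Path n → ℝ) ∈ LG n :=
  LG_of_bdd continuous_const 1 (by simp)

lemma LG_norm (n : ℕ) : (fun ω => ‖ω‖ : Path n → ℝ) ∈ LG n :=
  ⟨continuous_norm, 1, fun ω => by simp⟩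

lemma LG_coord {n : ℕ} (i : Fin (n + 1)) : (fun ω => ω i : Path n → ℝ) ∈ LG n :=
  ⟨continuous_apply i, 1, fun ω => by
    have := norm_le_pi_norm ω i
    rw [Real.norm_eq_abs] at this
    linarith⟩

lemma LG_mul_bdd {n : ℕ} {f g : Path n → ℝ} (hf : f ∈ LG n) (hg : Continuous g) (C : ℝ)
    (hC : ∀ ω, |g ω| ≤ C) : (fun ω => g ω * f ω) ∈ LG n := by
  obtain ⟨hfc, B, hB⟩ := hf
  refine ⟨hg.mul hfc, C * B, fun ω => ?_⟩
  rw [abs_mul, mul_assoc]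
  exact mul_le_mul (hC ω) (hB ω) (abs_nonneg _) ((abs_nonneg _).trans (hC ω))

/-- Continuous cutoff. -/
def cutoff {n : ℕ} (R : ℝ) (ω : Path n) : ℝ := max 0 (min 1 (R + 1 - ‖ω‖))

lemma cutoff_cont {n : ℕ} (R : ℝ) : Continuous (cutoff R : Path n → ℝ) := by
  unfold cutoff; fun_prop

lemma cutoff_nonneg {n : ℕ} (R : ℝ) (ω : Path n) : 0 ≤ cutoff R ω := le_max_left _ _

lemma cutoff_le_one {n : ℕ} (R : ℝ) (ω : Path n) : cutoff R ω ≤ 1 :=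
  max_le zero_le_one (min_le_left _ _)

lemma cutoff_abs {n : ℕ} (R : ℝ) (ω : Path n) : |cutoff R ω| ≤ 1 := by
  rw [abs_of_nonneg (cutoff_nonneg R ω)]; exact cutoff_le_one R ω

lemma cutoff_eq_one {n : ℕ} {R : ℝ} {ω : Path n} (h : ‖ω‖ ≤ R) : cutoff R ω = 1 := by
  unfold cutoff
  rw [min_eq_left (by linarith), max_eq_right zero_le_one]

lemma cutoff_eq_zero {n : ℕ} {R : ℝ} {ω : Path n} (h : R + 1 < ‖ω‖) : cutoff R ω = 0 := by
  unfold cutoff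
  exact max_eq_left ((min_le_right _ _).trans (by linarith))

lemma cutoff_mul_compact {n : ℕ} (R : ℝ) (f : Path n → ℝ) :
    HasCompactSupport (fun ω => cutoff R ω * f ω) := by
  refine HasCompactSupport.intro (isCompact_closedBall (0 : Path n) (R + 1)) ?_
  intro ω hω
  rw [Metric.mem_closedBall, dist_zero_right, not_le] at hω
  rw [cutoff_eq_zero hω, zero_mul]

open scoped CompactlySupported in
/-- The linear functional on `C_c` induced by a functional on `LG`. -/
def ccLin {n : ℕ} (ℓ : LG n →ₗ[ℝ] ℝ) : C_c(Path n, ℝ) →ₗ[ℝ] ℝ where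
  toFun f := ℓ ⟨f, by
    obtain ⟨C, hC⟩ := f.hasCompactSupport.exists_bound_of_continuous f.continuous
    exact LG_of_bdd f.continuous C hC⟩
  map_add' f g := by rw [← map_add]; rfl
  map_smul' c f := by rw [RingHom.id_apply, ← map_smul]; rfl

lemma exists_measure {n : ℕ} {P : Set (Path n)} {p : Fin n → ℝ → ℝ} {s₀ : ℝ}
    (hP : P ⊆ Omega n s₀) (hPc : IsClosed P) (ℓ : LG n →ₗ[ℝ] ℝ)
    (hℓ : ∀ (f : LG n) (r : ℝ), Hedge P p f.1 r → ℓ f ≤ r) :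
    ∃ Q : Measure (Path n), IsProbabilityMeasure Q ∧ Q Pᶜ = 0 ∧
      (∀ f ∈ LG n, Integrable f Q) ∧
      (∀ f : LG n, (∀ ω ∈ P, 0 ≤ f.1 ω) → ∫ ω, f.1 ω ∂Q ≤ ℓ f) ∧
      (∀ f : LG n, (∀ ε > 0, ∃ C : ℝ, ∀ ω ∈ P, f.1 ω ≤ C + ε * ‖ω‖) →
        ℓ f ≤ ∫ ω, f.1 ω ∂Q) := by
  have mono : ∀ f g : LG n, (∀ ω ∈ P, f.1 ω ≤ g.1 ω) → ℓ f ≤ ℓ g := by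
    intro f g h
    have := hℓ (f - g) 0 ((hedge_const 0).mono fun ω hω => by
      have e : (f - g).1 ω = f.1 ω - g.1 ω := rfl
      rw [e]; linarith [h ω hω])
    rw [map_sub] at this
    linarith
  have hpos : ∀ f : LG n, (∀ ω ∈ P, 0 ≤ f.1 ω) → 0 ≤ ℓ f := by
    intro f h
    have := mono 0 f h
    rwa [map_zero] at this
  let Λ := PositiveLinearMap.mk₀ (ccLin ℓ) (fun f hf => hpos _ fun ω _ => by
    have h : (0 : CompactlySupportedContinuousMap (Path n) ℝ) ≤ f := hf
    rw [CompactlySupportedContinuousMap.le_def] at h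
    exact h ω)
  have hint : ∀ (f : CompactlySupportedContinuousMap (Path n) ℝ) (hf : (f : Path n → ℝ) ∈ LG n),
      ∫ ω, f ω ∂(RealRMK.rieszMeasure Λ) = ℓ ⟨f, hf⟩ := fun f _ =>
    RealRMK.integral_rieszMeasure Λ f
  set Q := RealRMK.rieszMeasure Λ with hQ
  have hreg : Q.Regular := RealRMK.regular_rieszMeasure Λ
  clear_value Q
  -- support
  have hsupp : Q Pᶜ = 0 := by
    rw [hPc.isOpen_compl.measure_eq_iSup_isCompact]
    simp only [ENNReal.iSup_eq_zero]
    intro K hKP hK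
    obtain ⟨f, hf1, hf2, hf3, hf4⟩ :=
      exists_continuousMap_one_of_isCompact_subset_isOpen hK hPc.isOpen_compl hKP
    let F : CompactlySupportedContinuousMap (Path n) ℝ := ⟨f, hf2⟩
    have hF : (F : Path n → ℝ) ∈ LG n := LG_of_bdd f.continuous 1 fun ω => by
      have e : F ω = f ω := rfl
      rw [e, abs_of_nonneg (hf4 ω).1]; exact (hf4 ω).2
    have hF0 : ∀ ω ∈ P, F ω = 0 := fun ω hω =>
      image_eq_zero_of_notMem_tsupport fun h => hf3 h hω
    have h1 : ∫ ω, F ω ∂Q = 0 := by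
      rw [hint F hF]
      refine le_antisymm ?_ (hpos _ fun ω _ => (hf4 ω).1)
      exact hℓ _ _ ((hedge_const 0).mono fun ω hω => (hF0 ω hω).le)
    have h2 : (F : Path n → ℝ) =ᵐ[Q] 0 :=
      (integral_eq_zero_iff_of_nonneg (fun ω => (hf4 ω).1) F.integrable).1 h1
    refine measure_mono_null ?_ h2
    intro ω hω h
    have : F ω = 1 := hf1 hω
    have h' : F ω = 0 := h
    linarith
  have haeP : ∀ᵐ ω ∂Q, ω ∈ P := hsupp
  -- nonnegative functions
  have key : ∀ f : LG n, (∀ ω ∈ P, 0 ≤ f.1 ω) →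
      ∫⁻ ω, ENNReal.ofReal (f.1 ω) ∂Q ≤ ENNReal.ofReal (ℓ f) := by
    intro f hf
    have hc : Continuous f.1 := f.2.1
    have h1 : ∀ k : ℕ, ∫⁻ ω, ENNReal.ofReal (cutoff k ω * f.1 ω) ∂Q ≤ ENNReal.ofReal (ℓ f) := by
      intro k
      let F : CompactlySupportedContinuousMap (Path n) ℝ :=
        ⟨⟨fun ω => cutoff k ω * f.1 ω, (cutoff_cont _).mul hc⟩, cutoff_mul_compact _ _⟩
      have hF : (F : Path n → ℝ) ∈ LG n := LG_mul_bdd f.2 (cutoff_cont _) 1 (cutoff_abs _)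
      have h0 : ∀ ω ∈ P, 0 ≤ F ω := fun ω hω => mul_nonneg (cutoff_nonneg _ _) (hf ω hω)
      have h0' : 0 ≤ᵐ[Q] F := haeP.mono h0
      have e : ∫⁻ ω, ENNReal.ofReal (cutoff k ω * f.1 ω) ∂Q = ENNReal.ofReal (∫ ω, F ω ∂Q) :=
        (ofReal_integral_eq_lintegral_ofReal F.integrable h0').symm
      rw [e, hint F hF]
      refine ENNReal.ofReal_le_ofReal (mono _ _ fun ω hω => ?_)
      exact mul_le_of_le_one_left (hf ω hω) (cutoff_le_one _ _)
    have h2 : ∀ ω, liminf (fun k : ℕ => ENNReal.ofReal (cutoff k ω * f.1 ω)) atTop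
        = ENNReal.ofReal (f.1 ω) := by
      intro ω
      refine Tendsto.liminf_eq (tendsto_const_nhds.congr' ?_)
      obtain ⟨N, hN⟩ := exists_nat_ge ‖ω‖
      filter_upwards [eventually_ge_atTop N] with k hk
      have hk' : (N : ℝ) ≤ k := by exact_mod_cast hk
      rw [cutoff_eq_one (hN.trans hk'), one_mul]
    calc ∫⁻ ω, ENNReal.ofReal (f.1 ω) ∂Q
        = ∫⁻ ω, liminf (fun k : ℕ => ENNReal.ofReal (cutoff k ω * f.1 ω)) atTop ∂Q := by
          simp only [h2]
      _ ≤ liminf (fun k : ℕ => ∫⁻ ω, ENNReal.ofReal (cutoff k ω * f.1 ω) ∂Q) atTop :=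
          lintegral_liminf_le fun k =>
            (ENNReal.continuous_ofReal.comp ((cutoff_cont _).mul hc)).measurable
      _ ≤ ENNReal.ofReal (ℓ f) := by
          refine liminf_le_of_frequently_le' (Frequently.of_forall h1)
  have keyInt : ∀ f : LG n, (∀ ω ∈ P, 0 ≤ f.1 ω) → Integrable f.1 Q := by
    intro f hf
    refine ⟨f.2.1.aestronglyMeasurable, ?_⟩
    rw [hasFiniteIntegral_iff_ofReal (haeP.mono hf)]
    exact (key f hf).trans_lt ENNReal.ofReal_lt_top
  have allInt : ∀ f ∈ LG n, Integrable f Q := by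
    rintro f ⟨hfc, C, hC⟩
    have h1 := keyInt (⟨_, LG_one n⟩ + ⟨_, LG_norm n⟩) fun ω _ =>
      add_nonneg zero_le_one (norm_nonneg ω)
    refine (h1.const_mul C).mono' hfc.aestronglyMeasurable (Eventually.of_forall fun ω => ?_)
    exact hC ω
  have keyA : ∀ f : LG n, (∀ ω ∈ P, 0 ≤ f.1 ω) → ∫ ω, f.1 ω ∂Q ≤ ℓ f := by
    intro f hf
    rw [integral_eq_lintegral_of_nonneg_ae (haeP.mono hf) f.2.1.aestronglyMeasurable]
    exact ENNReal.toReal_le_of_le_ofReal (hpos f hf) (key f hf)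
  have hone : ℓ ⟨_, LG_one n⟩ = 1 := by
    refine le_antisymm (hℓ _ _ (hedge_const 1)) ?_
    have := hℓ (-⟨_, LG_one n⟩) (-1) ((hedge_const (-1)).mono fun ω _ => le_rfl)
    rw [map_neg] at this
    linarith
  have hfin : IsFiniteMeasure Q := by
    have h := allInt _ (LG_one n)
    rw [integrable_const_iff] at h
    exact h.resolve_left one_ne_zero
  set B := ℓ ⟨_, LG_norm n⟩ with hB
  have hB0 : 0 ≤ B := hpos _ fun ω _ => norm_nonneg ω
  have hmass : Q.real univ = 1 := by
    refine le_antisymm ?_ ?_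
    · have := keyA ⟨_, LG_one n⟩ fun _ _ => zero_le_one
      rw [hone] at this
      simpa using this
    · refine le_of_forall_pos_le_add fun ε hε => ?_
      obtain ⟨N, hN⟩ := exists_nat_gt (B / ε)
      have hN0 : (0 : ℝ) < N := (div_nonneg hB0 hε.le).trans_lt hN
      let F : CompactlySupportedContinuousMap (Path n) ℝ :=
        ⟨⟨fun ω => cutoff N ω * 1, (cutoff_cont _).mul continuous_const⟩, cutoff_mul_compact _ _⟩
      have hF : (F : Path n → ℝ) ∈ LG n := LG_mul_bdd (LG_one n) (cutoff_cont _) 1 (cutoff_abs _)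
      have h1 : ℓ ⟨_, LG_one n⟩ ≤ ℓ (⟨F, hF⟩ + (N : ℝ)⁻¹ • ⟨_, LG_norm n⟩) := by
        refine mono _ _ fun ω _ => ?_
        change (1 : ℝ) ≤ cutoff N ω * 1 + (N : ℝ)⁻¹ * ‖ω‖
        by_cases h : ‖ω‖ ≤ N
        · rw [cutoff_eq_one h]
          have : 0 ≤ (N : ℝ)⁻¹ * ‖ω‖ := by positivity
          linarith
        · push Not at h
          have h3 : 1 ≤ (N : ℝ)⁻¹ * ‖ω‖ := by
            rw [inv_mul_eq_div, le_div_iff₀ hN0]; linarith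
          linarith [cutoff_nonneg (N : ℝ) ω]
      rw [hone, map_add, map_smul, ← hint F hF, smul_eq_mul, ← hB] at h1
      have h2 : ∫ ω, F ω ∂Q ≤ Q.real univ := by
        have := integral_mono F.integrable (integrable_const (1 : ℝ) (μ := Q)) (fun ω => by
          change cutoff N ω * 1 ≤ 1
          rw [mul_one]; exact cutoff_le_one _ _)
        simpa using this
      have h3 : (N : ℝ)⁻¹ * B ≤ ε := by
        rw [inv_mul_eq_div, div_le_iff₀ hN0]
        rw [div_lt_iff₀ hε] at hN
        linarith
      linarith
  have hprob : IsProbabilityMeasure Q := ⟨by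
    rw [measureReal_def] at hmass
    rw [← ENNReal.toReal_eq_one_iff]; exact hmass⟩
  refine ⟨Q, hprob, hsupp, allInt, keyA, ?_⟩
  intro f hf
  refine le_of_forall_pos_le_add fun ε hε => ?_
  obtain ⟨C, hC⟩ := hf (ε / (B + 1)) (by positivity)
  have h1 := keyA (C • ⟨_, LG_one n⟩ + (ε / (B + 1)) • ⟨_, LG_norm n⟩ - f) (fun ω hω => by
    change 0 ≤ C * 1 + (ε / (B + 1)) * ‖ω‖ - f.1 ω
    linarith [hC ω hω])
  rw [map_sub, map_add, map_smul, map_smul, hone, ← hB, smul_eq_mul, smul_eq_mul] at h1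
  have i1 := allInt _ (LG_norm n)
  have i2 := allInt _ f.2
  have e : ∫ ω, (C • ⟨_, LG_one n⟩ + (ε / (B + 1)) • ⟨_, LG_norm n⟩ - f : LG n).1 ω ∂Q
      = C + (ε / (B + 1)) * ∫ ω, ‖ω‖ ∂Q - ∫ ω, f.1 ω ∂Q := by
    change ∫ ω, (C * 1 + (ε / (B + 1)) * ‖ω‖ - f.1 ω) ∂Q = _
    have i3 : Integrable (fun ω : Path n => C * 1 + (ε / (B + 1)) * ‖ω‖) Q :=
      (integrable_const _).add (i1.const_mul _)
    rw [integral_sub i3 i2, integral_add (integrable_const _) (i1.const_mul _), integral_const_mul (ε / (B + 1))]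
    simp
  rw [e] at h1
  have h2 : 0 ≤ (ε / (B + 1)) * ∫ ω, ‖ω‖ ∂Q :=
    mul_nonneg (by positivity) (integral_nonneg fun ω => norm_nonneg ω)
  have h3 : ε / (B + 1) * B ≤ ε := by
    rw [div_mul_eq_mul_div, div_le_iff₀ (by positivity)]; nlinarith
  linarith

/-! ### Measure-theoretic lemmas -/

lemma put_integrable {ν : Measure ℝ} [IsProbabilityMeasure ν] (h0 : ν (Iio 0) = 0) (K : ℝ) :
    Integrable (fun x => max (K - x) 0) ν := by
  refine Integrable.of_bound (C := |K|) (by fun_prop) ?_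
  have : ∀ᵐ x ∂ν, x ∉ Iio (0 : ℝ) := measure_eq_zero_iff_ae_notMem.1 h0
  filter_upwards [this] with x hx
  simp only [mem_Iio, not_lt] at hx
  rw [Real.norm_of_nonneg (le_max_right _ _)]
  exact max_le (by linarith [le_abs_self K]) (abs_nonneg _)

lemma put_slope_tendsto {ν : Measure ℝ} [IsProbabilityMeasure ν] (h0 : ν (Iio 0) = 0) (K : ℝ) :
    Tendsto (fun k : ℕ => ((k : ℝ) + 1) *
      (∫ x, max (K + 1 / ((k : ℝ) + 1) - x) 0 ∂ν - ∫ x, max (K - x) 0 ∂ν)) atTop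
      (𝓝 (ν.real (Iic K))) := by
  have e : ∀ k : ℕ, ((k : ℝ) + 1) *
      (∫ x, max (K + 1 / ((k : ℝ) + 1) - x) 0 ∂ν - ∫ x, max (K - x) 0 ∂ν)
      = ∫ x, ((k : ℝ) + 1) * (max (K + 1 / ((k : ℝ) + 1) - x) 0 - max (K - x) 0) ∂ν := by
    intro k
    rw [integral_const_mul, integral_sub (put_integrable h0 _) (put_integrable h0 _)]
  simp only [e]
  rw [← integral_indicator_one (measurableSet_Iic)]
  refine tendsto_integral_of_dominated_convergence (fun _ => 1) (fun k => by fun_prop)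
    (integrable_const _) (fun k => Eventually.of_forall fun x => ?_)
    (Eventually.of_forall fun x => ?_)
  · have hk : (0 : ℝ) < (k : ℝ) + 1 := by positivity
    have h1 : 0 < 1 / ((k : ℝ) + 1) := by positivity
    have h2 : 0 ≤ max (K + 1 / ((k : ℝ) + 1) - x) 0 - max (K - x) 0 :=
      sub_nonneg.2 (max_le_max (by linarith) le_rfl)
    have h3 : max (K + 1 / ((k : ℝ) + 1) - x) 0 - max (K - x) 0 ≤ 1 / ((k : ℝ) + 1) := by
      rw [sub_le_iff_le_add]
      exact max_le (by linarith [le_max_left (K - x) 0]) (by linarith [le_max_right (K - x) 0])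
    rw [Real.norm_of_nonneg (mul_nonneg hk.le h2)]
    calc _ ≤ ((k : ℝ) + 1) * (1 / ((k : ℝ) + 1)) := mul_le_mul_of_nonneg_left h3 hk.le
      _ = 1 := by field_simp
  · refine tendsto_const_nhds.congr' ?_
    by_cases hx : x ≤ K
    · refine Eventually.of_forall fun k => ?_
      have h1 : 0 < 1 / ((k : ℝ) + 1) := by positivity
      have e1 : max (K + 1 / ((k : ℝ) + 1) - x) 0 = K + 1 / ((k : ℝ) + 1) - x :=
        max_eq_left (by linarith)
      have e2 : max (K - x) 0 = K - x := max_eq_left (by linarith)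
      have e3 : (Iic K).indicator (1 : ℝ → ℝ) x = 1 := by simp [hx]
      have hk : (k : ℝ) + 1 ≠ 0 := by positivity
      beta_reduce
      rw [e1, e2, e3]
      field_simp
      ring
    · push Not at hx
      have h1 := tendsto_one_div_add_atTop_nhds_zero_nat (𝕜 := ℝ)
      filter_upwards [h1.eventually (gt_mem_nhds (sub_pos.2 hx))] with k hk
      have e1 : max (K + 1 / ((k : ℝ) + 1) - x) 0 = 0 :=
        max_eq_right (by linarith)
      have e2 : max (K - x) 0 = 0 := max_eq_right (by linarith)
      have e3 : (Iic K).indicator (1 : ℝ → ℝ) x = 0 := by simp [hx]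
      rw [e1, e2, e3]
      simp

lemma measure_eq_of_puts {ν ν' : Measure ℝ} [IsProbabilityMeasure ν] [IsProbabilityMeasure ν']
    (h0 : ν (Iio 0) = 0) (h0' : ν' (Iio 0) = 0)
    (h : ∀ K, 0 ≤ K → ∫ x, max (K - x) 0 ∂ν = ∫ x, max (K - x) 0 ∂ν') : ν = ν' := by
  refine Measure.ext_of_Iic ν ν' fun K => ?_
  by_cases hK : 0 ≤ K
  · have h1 := put_slope_tendsto h0 K
    have h2 := put_slope_tendsto h0' K
    have e : ∀ k : ℕ, (0 : ℝ) ≤ K + 1 / ((k : ℝ) + 1) := fun k => by positivity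
    simp only [h _ (e _), h K hK] at h1
    have := tendsto_nhds_unique h1 h2
    rwa [measureReal_def, measureReal_def,
      ENNReal.toReal_eq_toReal_iff' (measure_ne_top _ _) (measure_ne_top _ _)] at this
  · push Not at hK
    have hs : Iic K ⊆ Iio 0 := fun x hx => lt_of_le_of_lt hx hK
    rw [measure_mono_null hs h0, measure_mono_null hs h0']

/-- Image of the positive part of `Y` under `r`. -/
def imgMeas {α β : Type*} [MeasurableSpace α] [MeasurableSpace β] (Q : Measure α) (r : α → β)
    (Y : α → ℝ) : Measure β :=
  (Q.withDensity fun ω => ENNReal.ofReal (Y ω)).map r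

lemma imgMeas_finite {α β : Type*} [MeasurableSpace α] [MeasurableSpace β] {Q : Measure α}
    (r : α → β) {Y : α → ℝ} (hY : Integrable Y Q) : IsFiniteMeasure (imgMeas Q r Y) := by
  have : IsFiniteMeasure (Q.withDensity fun ω => ENNReal.ofReal (Y ω)) :=
    isFiniteMeasure_withDensity_ofReal hY.2
  unfold imgMeas
  infer_instance

lemma lintegral_imgMeas {α β : Type*} [MeasurableSpace α] [MeasurableSpace β] {Q : Measure α}
    {r : α → β} (hr : Measurable r) {Y : α → ℝ} (hY : Measurable Y) {φ : β → ℝ}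
    (hφ : Measurable φ) (h0 : ∀ x, 0 ≤ φ x) :
    ∫⁻ x, ENNReal.ofReal (φ x) ∂(imgMeas Q r Y) = ∫⁻ ω, ENNReal.ofReal (φ (r ω) * Y ω) ∂Q := by
  unfold imgMeas
  have hm : Measurable fun ω => ENNReal.ofReal (φ (r ω)) := (hφ.comp hr).ennreal_ofReal
  rw [lintegral_map hφ.ennreal_ofReal hr,
    lintegral_withDensity_eq_lintegral_mul _ hY.ennreal_ofReal hm]
  refine lintegral_congr fun ω => ?_
  simp only [Pi.mul_apply]
  rw [ENNReal.ofReal_mul (h0 _), mul_comm]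

lemma imgMeas_le_iff {α β : Type*} [MeasurableSpace α] [MeasurableSpace β] {Q : Measure α}
    {r : α → β} (hr : Measurable r) {Y : α → ℝ} (hY : Measurable Y) (hYi : Integrable Y Q)
    {φ : β → ℝ} (hφ : Measurable φ) (h0 : ∀ x, 0 ≤ φ x) (C : ℝ) (hC : ∀ x, φ x ≤ C) :
    ∫ ω, φ (r ω) * Y ω ∂Q ≤ 0 ↔
      ∫⁻ x, ENNReal.ofReal (φ x) ∂(imgMeas Q r Y) ≤
        ∫⁻ x, ENNReal.ofReal (φ x) ∂(imgMeas Q r (fun ω => -Y ω)) := by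
  have hi : Integrable (fun ω => φ (r ω) * Y ω) Q := by
    refine hYi.bdd_mul (c := C) (hφ.comp hr).aestronglyMeasurable (Eventually.of_forall fun ω => ?_)
    rw [Real.norm_of_nonneg (h0 _)]; exact hC _
  have hni : ∫⁻ ω, ENNReal.ofReal (-(φ (r ω) * Y ω)) ∂Q ≠ ⊤ := hi.neg.lintegral_lt_top.ne
  have hY' : Measurable (fun ω => -Y ω) := hY.neg
  rw [lintegral_imgMeas hr hY hφ h0, lintegral_imgMeas hr hY' hφ h0,
    integral_eq_lintegral_pos_part_sub_lintegral_neg_part hi, sub_nonpos,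
    ENNReal.toReal_le_toReal hi.lintegral_lt_top.ne hni]
  simp only [mul_neg]

lemma measure_le_of_cc {β : Type*} [TopologicalSpace β] [T2Space β] [LocallyCompactSpace β]
    [MeasurableSpace β] [BorelSpace β] {ν ν' : Measure β} [ν.Regular] [ν'.Regular]
    [IsFiniteMeasure ν]
    (h : ∀ f : C(β, ℝ), HasCompactSupport f → (∀ x, 0 ≤ f x ∧ f x ≤ 1) →
      ∫⁻ x, ENNReal.ofReal (f x) ∂ν ≤ ∫⁻ x, ENNReal.ofReal (f x) ∂ν') : ν ≤ ν' := by
  rw [Measure.le_iff]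
  intro A hA
  rw [hA.measure_eq_iSup_isCompact_of_ne_top (measure_ne_top ν A)]
  refine iSup_le fun K => iSup_le fun hKA => iSup_le fun hK => ?_
  refine le_trans ?_ (measure_mono hKA)
  rw [K.measure_eq_iInf_isOpen ν']
  refine le_iInf fun U => le_iInf fun hKU => le_iInf fun hU => ?_
  obtain ⟨f, hf1, hf2, hf3, hf4⟩ := exists_continuousMap_one_of_isCompact_subset_isOpen hK hU hKU
  calc ν K = ∫⁻ x, K.indicator 1 x ∂ν := by rw [lintegral_indicator_one hK.measurableSet]
    _ ≤ ∫⁻ x, ENNReal.ofReal (f x) ∂ν := by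
        refine lintegral_mono fun x => ?_
        by_cases hx : x ∈ K
        · simp [hx, hf1 hx]
        · simp [hx]
    _ ≤ ∫⁻ x, ENNReal.ofReal (f x) ∂ν' := h f hf2 hf4
    _ ≤ ∫⁻ x, U.indicator 1 x ∂ν' := by
        refine lintegral_mono fun x => ?_
        by_cases hx : x ∈ U
        · simpa [hx] using (hf4 x).2
        · have : f x = 0 := image_eq_zero_of_notMem_tsupport fun h => hx (hf3 h)
          simp [this]
    _ = ν' U := by rw [lintegral_indicator_one hU.measurableSet]

lemma restr_cont {n : ℕ} (j : Fin n) : Continuous (restr j : Path n → _) := by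
  unfold restr; fun_prop

lemma incr_meas {n : ℕ} (j : Fin n) :
    Measurable (fun ω : Path n => ω j.succ - ω j.castSucc) := by fun_prop

lemma supermart_iff {n : ℕ} {Q : Measure (Path n)} [IsFiniteMeasure Q]
    (hi : ∀ i, Integrable (fun ω : Path n => ω i) Q) (j : Fin n) :
    (∀ (A : Set (Fin j → ℝ)), MeasurableSet A → ∫ ω, Set.indicator A (fun _ => (1 : ℝ))
      (restr j ω) * (ω j.succ - ω j.castSucc) ∂Q ≤ 0) ↔
    imgMeas Q (restr j) (fun ω => ω j.succ - ω j.castSucc) ≤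
      imgMeas Q (restr j) (fun ω => -(ω j.succ - ω j.castSucc)) := by
  have key : ∀ A : Set (Fin j → ℝ), MeasurableSet A → (∫ ω, Set.indicator A (fun _ => (1 : ℝ))
      (restr j ω) * (ω j.succ - ω j.castSucc) ∂Q ≤ 0 ↔
      imgMeas Q (restr j) (fun ω => ω j.succ - ω j.castSucc) A ≤
      imgMeas Q (restr j) (fun ω => -(ω j.succ - ω j.castSucc)) A) := by
    intro A hA
    rw [imgMeas_le_iff (restr_cont j).measurable (incr_meas j) ((hi _).sub (hi _))
      (measurable_const.indicator hA) (fun x => indicator_nonneg (fun _ _ => zero_le_one) x) 1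
      (fun x => by by_cases hx : x ∈ A <;> simp [hx])]
    have e : ∀ x, ENNReal.ofReal (A.indicator (fun _ => (1 : ℝ)) x) = A.indicator 1 x := by
      intro x; by_cases hx : x ∈ A <;> simp [hx]
    simp only [e]
    rw [lintegral_indicator_one hA, lintegral_indicator_one hA]
  rw [Measure.le_iff]
  exact forall₂_congr key

lemma supermart_bdd {n : ℕ} {Q : Measure (Path n)} [IsFiniteMeasure Q]
    (hi : ∀ i, Integrable (fun ω : Path n => ω i) Q) (hQ : IsSupermartingaleLaw Q) (j : Fin n)
    {φ : (Fin j → ℝ) → ℝ}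
    (hφ : Measurable φ) (h0 : ∀ x, 0 ≤ φ x) (C : ℝ) (hC : ∀ x, φ x ≤ C) :
    ∫ ω, φ (restr j ω) * (ω j.succ - ω j.castSucc) ∂Q ≤ 0 := by
  rw [imgMeas_le_iff (restr_cont j).measurable (incr_meas j) ((hi _).sub (hi _)) hφ h0 C hC]
  exact lintegral_mono' ((supermart_iff hi j).1 (hQ j)) le_rfl

lemma supermart_of_cc {n : ℕ} {Q : Measure (Path n)} [IsFiniteMeasure Q]
    (hi : ∀ i, Integrable (fun ω : Path n => ω i) Q)
    (h : ∀ (j : Fin n) (φ : C(Fin j → ℝ, ℝ)), HasCompactSupport φ → (∀ x, 0 ≤ φ x ∧ φ x ≤ 1) →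
      ∫ ω, φ (restr j ω) * (ω j.succ - ω j.castSucc) ∂Q ≤ 0) : IsSupermartingaleLaw Q := by
  intro j
  rw [supermart_iff hi j]
  have hY : Integrable (fun ω : Path n => ω j.succ - ω j.castSucc) Q := (hi _).sub (hi _)
  have := imgMeas_finite (restr j) hY
  have := imgMeas_finite (restr j) hY.neg
  have : IsFiniteMeasure (imgMeas Q (restr j) (fun ω : Path n => -(ω j.succ - ω j.castSucc))) :=
    imgMeas_finite (restr j) hY.neg
  refine measure_le_of_cc fun f hf h01 => ?_
  rw [← imgMeas_le_iff (restr_cont j).measurable (incr_meas j) hY f.continuous.measurable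
    (fun x => (h01 x).1) 1 (fun x => (h01 x).2)]
  exact h j f hf h01

/-! ### Approximation and limits -/

lemma posE_eq (x : EReal) : posE x = x.toENNReal := rfl

lemma le_eexpE {n : ℕ} {Q : Measure (Path n)} {G : Path n → EReal} {f : ℕ → Path n → ℝ}
    {F : Path n → ℝ} (hF : Integrable F Q) (hfm : ∀ m, Measurable (f m))
    (hf : ∀ m, Integrable (f m) Q)
    (hb : ∀ m, ∀ᵐ ω ∂Q, f m ω ≤ F ω)
    (hlim : ∀ᵐ ω ∂Q, Tendsto (fun m => (f m ω : EReal)) atTop (𝓝 (G ω))) {v : ℝ}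
    (hv : ∀ m, v ≤ ∫ ω, f m ω ∂Q) : (v : EReal) ≤ eexpE Q G := by
  have hA : Tendsto (fun m => ∫⁻ ω, ENNReal.ofReal (f m ω) ∂Q) atTop
      (𝓝 (∫⁻ ω, posE (G ω) ∂Q)) := by
    refine tendsto_lintegral_of_dominated_convergence (fun ω => ENNReal.ofReal (F ω))
      (fun m => (hfm m).ennreal_ofReal) (fun m => ?_) hF.lintegral_lt_top.ne ?_
    · filter_upwards [hb m] with ω h using ENNReal.ofReal_le_ofReal h
    · filter_upwards [hlim] with ω h
      have := (EReal.continuous_toENNReal.tendsto _).comp h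
      exact this
  have hAle : ∫⁻ ω, posE (G ω) ∂Q ≠ ⊤ := by
    refine ne_top_of_le_ne_top hF.lintegral_lt_top.ne (le_of_tendsto' hA fun m => ?_)
    refine lintegral_mono_ae ?_
    filter_upwards [hb m] with ω h using ENNReal.ofReal_le_ofReal h
  set A := ∫⁻ ω, posE (G ω) ∂Q with hAdef
  have hB : ∫⁻ ω, posE (-(G ω)) ∂Q ≤
      liminf (fun m => ∫⁻ ω, ENNReal.ofReal (-(f m ω)) ∂Q) atTop := by
    refine le_trans (lintegral_mono_ae ?_)
      (lintegral_liminf_le (fun m => (hfm m).neg.ennreal_ofReal))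
    filter_upwards [hlim] with ω h
    have h1 : Tendsto (fun m => (-(f m ω : EReal)).toENNReal) atTop (𝓝 ((-(G ω)).toENNReal)) :=
      ((EReal.continuous_toENNReal.comp continuous_neg).tendsto _).comp h
    exact h1.liminf_eq.ge
  have hAr : Tendsto (fun m => (∫⁻ ω, ENNReal.ofReal (f m ω) ∂Q).toReal - v) atTop
      (𝓝 (A.toReal - v)) :=
    ((ENNReal.tendsto_toReal hAle).comp hA).sub_const v
  have key : ∀ m, (∫⁻ ω, ENNReal.ofReal (-(f m ω)) ∂Q).toReal ≤
      (∫⁻ ω, ENNReal.ofReal (f m ω) ∂Q).toReal - v := by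
    intro m
    have h1 := hv m
    rw [integral_eq_lintegral_pos_part_sub_lintegral_neg_part (hf m)] at h1
    linarith
  have hnn : 0 ≤ A.toReal - v := ge_of_tendsto' hAr fun m => ENNReal.toReal_nonneg.trans (key m)
  have hB2 : ∫⁻ ω, posE (-(G ω)) ∂Q ≤ ENNReal.ofReal (A.toReal - v) := by
    refine hB.trans ?_
    rw [← ((ENNReal.continuous_ofReal.tendsto _).comp hAr).liminf_eq]
    refine liminf_le_liminf (Eventually.of_forall fun m => ?_)
    have h2 : ∫⁻ ω, ENNReal.ofReal (-(f m ω)) ∂Q ≠ ⊤ := (hf m).neg.lintegral_lt_top.ne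
    rw [← ENNReal.ofReal_toReal h2]
    exact ENNReal.ofReal_le_ofReal (key m)
  unfold eexpE
  have hBt : ∫⁻ ω, posE (-(G ω)) ∂Q ≠ ⊤ := ne_top_of_le_ne_top ENNReal.ofReal_ne_top hB2
  rw [← hAdef, ← EReal.coe_ennreal_toReal hAle, ← EReal.coe_ennreal_toReal hBt, ← EReal.coe_sub,
    EReal.coe_le_coe_iff]
  have := ENNReal.toReal_le_of_le_ofReal hnn hB2
  linarith

/-- Truncated payoff. -/
def trunc (x : EReal) (m : ℕ) : ℝ := (max x ((-(m : ℝ) : ℝ) : EReal)).toReal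

lemma coe_trunc {x : EReal} (hx : x ≠ ⊤) (m : ℕ) :
    ((trunc x m : ℝ) : EReal) = max x ((-(m : ℝ) : ℝ) : EReal) := by
  unfold trunc
  refine EReal.coe_toReal ?_ ?_
  · exact (max_lt (lt_top_iff_ne_top.2 hx) (EReal.coe_lt_top _)).ne
  · exact (lt_of_lt_of_le (EReal.bot_lt_coe _) (le_max_right _ _)).ne'

lemma trunc_le {x : EReal} (hx : x ≠ ⊤) {m : ℕ} {c : ℝ} (h : x ≤ c) (h' : -(m : ℝ) ≤ c) :
    trunc x m ≤ c := by
  rw [← EReal.coe_le_coe_iff, coe_trunc hx]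
  exact max_le h (EReal.coe_le_coe_iff.2 h')

lemma le_trunc {x : EReal} (hx : x ≠ ⊤) (m : ℕ) : x ≤ (trunc x m : ℝ) := by
  rw [coe_trunc hx]; exact le_max_left _ _

lemma neg_le_trunc {x : EReal} (hx : x ≠ ⊤) (m : ℕ) : -(m : ℝ) ≤ trunc x m := by
  rw [← EReal.coe_le_coe_iff, coe_trunc hx]; exact le_max_right _ _

/-- Lipschitz upper envelope. -/
def env {n : ℕ} (P : Set (Path n)) (G : Path n → EReal) (m : ℕ) (x : Path n) : ℝ :=
  ⨆ y : P, (trunc (G y) m - ((m : ℝ) + 1) * dist x y)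

section Env

variable {n : ℕ} {P : Set (Path n)} {G : Path n → EReal}

lemma env_term_le (hG : ∀ x ∈ P, G x ≠ ⊤) {C ε : ℝ} (hε : 0 ≤ ε) (hε1 : ε ≤ 1)
    (hC : ∀ x ∈ P, G x ≤ ((C + ε * ‖x‖ : ℝ) : EReal)) (m : ℕ) (x : Path n) (y : P) :
    trunc (G y) m - ((m : ℝ) + 1) * dist x y ≤ |C| + ε * ‖x‖ - m * dist x y := by
  have h1 : trunc (G y) m ≤ |C| + ε * ‖(y : Path n)‖ := by
    refine trunc_le (hG y y.2) ((hC y y.2).trans ?_) ?_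
    · rw [EReal.coe_le_coe_iff]; linarith [le_abs_self C]
    · have : (0 : ℝ) ≤ m := Nat.cast_nonneg m
      have := abs_nonneg C
      have := mul_nonneg hε (norm_nonneg (y : Path n))
      linarith
  have h2 : ‖(y : Path n)‖ ≤ ‖x‖ + dist x y := by
    have := norm_sub_norm_le (y : Path n) x
    rw [← dist_eq_norm, dist_comm] at this
    linarith
  have h3 := mul_le_mul_of_nonneg_left h2 hε
  have h4 := mul_le_mul_of_nonneg_right hε1 (dist_nonneg (x := x) (y := (y : Path n)))
  linarith

lemma env_bdd (hG : ∀ x ∈ P, G x ≠ ⊤) {C ε : ℝ} (hε : 0 ≤ ε) (hε1 : ε ≤ 1)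
    (hC : ∀ x ∈ P, G x ≤ ((C + ε * ‖x‖ : ℝ) : EReal)) (m : ℕ) (x : Path n) :
    BddAbove (range fun y : P => trunc (G y) m - ((m : ℝ) + 1) * dist x y) := by
  refine ⟨|C| + ε * ‖x‖, ?_⟩
  rintro _ ⟨y, rfl⟩
  have h1 := env_term_le hG hε hε1 hC m x y
  have h2 : (0 : ℝ) ≤ m * dist x y := by positivity
  beta_reduce
  linarith

lemma env_le (hne : P.Nonempty) (hG : ∀ x ∈ P, G x ≠ ⊤) {C ε : ℝ} (hε : 0 ≤ ε) (hε1 : ε ≤ 1)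
    (hC : ∀ x ∈ P, G x ≤ ((C + ε * ‖x‖ : ℝ) : EReal)) (m : ℕ) (x : Path n) :
    env P G m x ≤ |C| + ε * ‖x‖ := by
  have : Nonempty P := hne.to_subtype
  refine ciSup_le fun y => ?_
  have h1 := env_term_le hG hε hε1 hC m x y
  have h2 : (0 : ℝ) ≤ m * dist x y := by positivity
  linarith

lemma le_env (hG : ∀ x ∈ P, G x ≠ ⊤) {C ε : ℝ} (hε : 0 ≤ ε) (hε1 : ε ≤ 1)
    (hC : ∀ x ∈ P, G x ≤ ((C + ε * ‖x‖ : ℝ) : EReal)) (m : ℕ) (x : Path n) (y : P) :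
    trunc (G y) m - ((m : ℝ) + 1) * dist x y ≤ env P G m x :=
  le_ciSup (env_bdd hG hε hε1 hC m x) y

lemma env_ge (hG : ∀ x ∈ P, G x ≠ ⊤) {C ε : ℝ} (hε : 0 ≤ ε) (hε1 : ε ≤ 1)
    (hC : ∀ x ∈ P, G x ≤ ((C + ε * ‖x‖ : ℝ) : EReal)) (m : ℕ) {x : Path n} (hx : x ∈ P) :
    G x ≤ (env P G m x : ℝ) := by
  refine (le_trunc (hG x hx) m).trans (EReal.coe_le_coe_iff.2 ?_)
  have := le_env hG hε hε1 hC m x ⟨x, hx⟩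
  simpa using this

lemma env_lip (hne : P.Nonempty) (hG : ∀ x ∈ P, G x ≠ ⊤) {C ε : ℝ} (hε : 0 ≤ ε) (hε1 : ε ≤ 1)
    (hC : ∀ x ∈ P, G x ≤ ((C + ε * ‖x‖ : ℝ) : EReal)) (m : ℕ) (x x' : Path n) :
    env P G m x ≤ env P G m x' + ((m : ℝ) + 1) * dist x x' := by
  have : Nonempty P := hne.to_subtype
  refine ciSup_le fun y => ?_
  have h1 := le_env hG hε hε1 hC m x' y
  have h2 : dist x' (y : Path n) ≤ dist x x' + dist x y := by
    rw [dist_comm x x']; exact dist_triangle _ _ _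
  have h3 := mul_le_mul_of_nonneg_left h2 (show (0 : ℝ) ≤ (m : ℝ) + 1 by positivity)
  linarith

lemma env_mem (hne : P.Nonempty) (hG : ∀ x ∈ P, G x ≠ ⊤) {C ε : ℝ} (hε : 0 ≤ ε) (hε1 : ε ≤ 1)
    (hC : ∀ x ∈ P, G x ≤ ((C + ε * ‖x‖ : ℝ) : EReal)) (m : ℕ) : env P G m ∈ LG n := by
  have hlip : LipschitzWith ((m : ℝ≥0) + 1) (env P G m) := by
    refine LipschitzWith.of_le_add_mul _ fun x y => ?_
    simpa using env_lip hne hG hε hε1 hC m x y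
  obtain ⟨B, hB⟩ : ∃ B, ∀ x, |env P G m x| ≤ B + ((m : ℝ) + 1) * ‖x‖ := by
    refine ⟨|env P G m 0|, fun x => ?_⟩
    have h1 := env_lip hne hG hε hε1 hC m x 0
    have h2 := env_lip hne hG hε hε1 hC m 0 x
    rw [dist_zero_right] at h1
    rw [dist_zero_left] at h2
    rw [abs_le]
    constructor
    · linarith [neg_abs_le (env P G m 0)]
    · linarith [le_abs_self (env P G m 0)]
  refine ⟨hlip.continuous, |B| + ((m : ℝ) + 1), fun x => (hB x).trans ?_⟩
  have h1 := le_abs_self B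
  have h2 : 0 ≤ |B| * ‖x‖ := by positivity
  have h3 : (0 : ℝ) ≤ m := Nat.cast_nonneg m
  nlinarith

lemma env_tendsto (hG : ∀ x ∈ P, G x ≠ ⊤) (hus : UpperSemicontinuousOn G P) {C ε : ℝ}
    (hε : 0 ≤ ε) (hε1 : ε ≤ 1)
    (hC : ∀ x ∈ P, G x ≤ ((C + ε * ‖x‖ : ℝ) : EReal)) {x : Path n} (hx : x ∈ P) :
    Tendsto (fun m => (env P G m x : EReal)) atTop (𝓝 (G x)) := by
  have : Nonempty P := ⟨⟨x, hx⟩⟩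
  refine tendsto_order.2 ⟨fun a ha => Eventually.of_forall fun m =>
    ha.trans_le (env_ge hG hε hε1 hC m hx), fun b hb => ?_⟩
  obtain ⟨c, hc1, hc2⟩ := EReal.lt_iff_exists_real_btwn.1 hb
  have h1 := hus x hx c hc1
  rw [eventually_nhdsWithin_iff, Metric.eventually_nhds_iff] at h1
  obtain ⟨δ, hδ, h1⟩ := h1
  obtain ⟨N, hN⟩ := exists_nat_ge (-c)
  obtain ⟨N', hN'⟩ := exists_nat_ge ((|C| + ε * ‖x‖ - c) / δ)
  filter_upwards [eventually_ge_atTop N, eventually_ge_atTop N'] with m hm hm'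
  refine lt_of_le_of_lt (EReal.coe_le_coe_iff.2 ?_) hc2
  refine ciSup_le fun y => ?_
  have hmN : (N : ℝ) ≤ m := Nat.cast_le.2 hm
  have hmN' : (N' : ℝ) ≤ m := Nat.cast_le.2 hm'
  by_cases hd : dist x (y : Path n) < δ
  · have h2 : trunc (G y) m ≤ c := by
      refine trunc_le (hG y y.2) (h1 (by rwa [dist_comm]) y.2).le (by linarith)
    have : 0 ≤ ((m : ℝ) + 1) * dist x y := by positivity
    linarith
  · push Not at hd
    have h2 := env_term_le hG hε hε1 hC m x y
    have h3 : (|C| + ε * ‖x‖ - c) / δ ≤ m := hN'.trans hmN'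
    rw [div_le_iff₀ hδ] at h3
    have h4 := mul_le_mul_of_nonneg_left hd (Nat.cast_nonneg (α := ℝ) m)
    linarith

end Env
/-! ### Weak duality -/

lemma MSetP_integrable {n : ℕ} {s₀ : ℝ} {P : Set (Path n)} (hPsub : P ⊆ Omega n s₀)
    {p : Fin n → ℝ → ℝ} {μ : Fin n → Measure ℝ} (hμ : PutPricesFrom p μ)
    {Q : Measure (Path n)} [IsProbabilityMeasure Q] (hm : ∀ i : Fin n, Q.map (fun ω => ω i.succ) = μ i)
    (hae : ∀ᵐ ω ∂Q, ω ∈ P) (i : Fin (n + 1)) : Integrable (fun ω : Path n => ω i) Q := by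
  refine Fin.cases ?_ (fun i => ?_) i
  · refine (integrable_const s₀).congr ?_
    filter_upwards [hae] with ω hω using (hPsub hω).1.symm
  · have h1 := hμ.2.2.1 i
    rw [← hm i] at h1
    exact (integrable_map_measure (f := fun ω : Path n => ω i.succ) (g := fun x : ℝ => x)
      measurable_id.aestronglyMeasurable (measurable_pi_apply _).aemeasurable).1 h1

lemma weak_duality {n : ℕ} {s₀ : ℝ} {P : Set (Path n)} (hPsub : P ⊆ Omega n s₀)
    (hPclosed : IsClosed P)
    {p : Fin n → ℝ → ℝ} {μ : Fin n → Measure ℝ} (hμ : PutPricesFrom p μ)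
    {G : Path n → EReal} {Q : Measure (Path n)} (hQ : Q ∈ MSetP s₀ μ P)
    (X : Static n) (D : Dyn n) (hD : D.Nonneg)
    (h : ∀ ω ∈ P, G ω ≤ ((X.putPayoff ω + D.gains ω : ℝ) : EReal)) :
    eexpE Q G ≤ (X.price p : EReal) := by
  obtain ⟨⟨⟨hprob, hOm, hm⟩, hsup⟩, hQP⟩ := hQ
  have hae : ∀ᵐ ω ∂Q, ω ∈ P := by
    rw [ae_iff]
    exact (prob_compl_eq_zero_iff hPclosed.measurableSet).2 hQP
  have hi := MSetP_integrable hPsub hμ hm hae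
  have hput : ∀ (i : Fin n) (K : ℝ), Integrable (fun ω : Path n => max (K - ω i.succ) 0) Q :=
    fun i K => ((integrable_const K).sub (hi _)).pos_part
  have hputI : ∀ (i : Fin n) (K : ℝ), 0 ≤ K →
      ∫ ω, max (K - ω i.succ) 0 ∂Q = p i K := by
    intro i K hK
    rw [hμ.2.2.2 i K hK, ← hm i, integral_map (measurable_pi_apply _).aemeasurable (by fun_prop)]
  have hX : Integrable (fun ω => X.putPayoff ω) Q := by
    unfold Static.putPayoff
    exact (integrable_const _).add (integrable_finsetSum _ fun k _ => (hput _ _).const_mul _)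
  have hXI : ∫ ω, X.putPayoff ω ∂Q = X.price p := by
    unfold Static.putPayoff Static.price
    rw [integral_add (integrable_const _)
      (integrable_finsetSum _ fun k _ => (hput _ _).const_mul _),
      integral_finsetSum _ (fun k _ => (hput _ _).const_mul _)]
    simp only [integral_const_mul, integral_const, probReal_univ, one_smul]
    congr 1
    refine Finset.sum_congr rfl fun k _ => ?_
    rw [hputI _ _ (X.strike_nonneg k)]
  have hg : ∀ j : Fin n, Integrable
      (fun ω => D.pos j (restr j ω) * (ω j.succ - ω j.castSucc)) Q := by
    intro j
    obtain ⟨C, hC⟩ := D.bdd j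
    refine ((hi j.succ).sub (hi j.castSucc)).bdd_mul (c := C)
      ((D.meas j).comp (restr_cont j).measurable).aestronglyMeasurable
      (Eventually.of_forall fun ω => ?_)
    exact hC _
  have hgD : Integrable (fun ω => D.gains ω) Q := by
    unfold Dyn.gains
    exact integrable_finsetSum _ fun j _ => hg j
  have hgI : ∫ ω, D.gains ω ∂Q ≤ 0 := by
    unfold Dyn.gains
    rw [integral_finsetSum _ (fun j _ => hg j)]
    refine Finset.sum_nonpos fun j _ => ?_
    obtain ⟨C, hC⟩ := D.bdd j
    exact supermart_bdd hi hsup j (D.meas j) (hD j) C fun x => (le_abs_self _).trans (hC x)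
  have hΨ : Integrable (fun ω => X.putPayoff ω + D.gains ω) Q := hX.add hgD
  have hΨI : ∫ ω, (X.putPayoff ω + D.gains ω) ∂Q ≤ X.price p := by
    rw [integral_add hX hgD, hXI]; linarith
  refine le_trans ?_ (EReal.coe_le_coe_iff.2 hΨI)
  rw [integral_eq_lintegral_pos_part_sub_lintegral_neg_part hΨ, EReal.coe_sub,
    EReal.coe_ennreal_toReal hΨ.lintegral_lt_top.ne]
  have hneg : ∫⁻ ω, ENNReal.ofReal (-(X.putPayoff ω + D.gains ω)) ∂Q ≠ ⊤ :=
    hΨ.neg.lintegral_lt_top.ne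
  rw [EReal.coe_ennreal_toReal hneg]
  unfold eexpE
  refine EReal.sub_le_sub ?_ ?_
  · rw [EReal.coe_ennreal_le_coe_ennreal_iff]
    refine lintegral_mono_ae ?_
    filter_upwards [hae] with ω hω
    have := EReal.toENNReal_le_toENNReal (h ω hω)
    exact this
  · rw [EReal.coe_ennreal_le_coe_ennreal_iff]
    refine lintegral_mono_ae ?_
    filter_upwards [hae] with ω hω
    have := EReal.toENNReal_le_toENNReal (EReal.neg_le_neg_iff.2 (h ω hω))
    exact this

/-! ### Strong duality -/

lemma castSucc_bdd {n : ℕ} {s₀ : ℝ} {P : Set (Path n)} (hPsub : P ⊆ Omega n s₀) (j : Fin n)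
    (φ : C(Fin j → ℝ, ℝ)) (hφ : HasCompactSupport φ) (h01 : ∀ x, 0 ≤ φ x ∧ φ x ≤ 1) :
    ∃ C, ∀ ω ∈ P, φ (restr j ω) * ω j.castSucc ≤ C := by
  obtain ⟨R, hR⟩ := hφ.isCompact.isBounded.exists_norm_le
  refine ⟨max |s₀| |R|, fun ω hω => ?_⟩
  have hpos : 0 ≤ ω j.castSucc := (hPsub hω).2 _
  by_cases hz : φ (restr j ω) = 0
  · rw [hz, zero_mul]; exact le_max_of_le_left (abs_nonneg _)
  · have hle : ω j.castSucc ≤ max |s₀| |R| := by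
      by_cases hj : (j : ℕ) = 0
      · have : j.castSucc = 0 := by ext; simpa using hj
        rw [this, (hPsub hω).1]; exact le_max_of_le_left (le_abs_self _)
      · have h1 := hR _ (subset_tsupport _ (Function.mem_support.2 hz))
        have h2 := norm_le_pi_norm (restr j ω) ⟨(j : ℕ) - 1, by omega⟩
        have h3 : restr j ω ⟨(j : ℕ) - 1, by omega⟩ = ω j.castSucc := by
          unfold restr
          congr 1
          ext
          simp
          omega
        rw [h3, Real.norm_eq_abs] at h2
        exact le_max_of_le_right (((le_abs_self _).trans (h2.trans h1)).trans (le_abs_self R))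
    calc _ ≤ 1 * ω j.castSucc := mul_le_mul_of_nonneg_right (h01 _).2 hpos
      _ ≤ _ := by rwa [one_mul]

lemma strong_duality {n : ℕ} {s₀ : ℝ} {P : Set (Path n)} (hPsub : P ⊆ Omega n s₀)
    (hPclosed : IsClosed P)
    {p : Fin n → ℝ → ℝ} {μ : Fin n → Measure ℝ} (hμ : PutPricesFrom p μ)
    {G : Path n → EReal} (hG : ∀ ω ∈ P, G ω ≠ ⊤) (hus : UpperSemicontinuousOn G P)
    (hsub : ∀ ε > 0, ∃ C : ℝ, ∀ ω ∈ P, G ω ≤ ((C + ε * ‖ω‖ : ℝ) : EReal)) (v : ℝ)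
    (hv : ∀ f r, (∀ ω ∈ P, G ω ≤ ((f ω : ℝ) : EReal)) → Hedge P p f r → v ≤ r) :
    ∃ Q ∈ MSetP s₀ μ P, (v : EReal) ≤ eexpE Q G := by
  obtain ⟨C, hC⟩ := hsub 1 one_pos
  obtain ⟨ℓ, hℓ, hℓv⟩ := exists_functional hPsub G ⟨max C 1, fun ω hω => (hC ω hω).trans (by
    rw [EReal.coe_le_coe_iff]
    have h1 := norm_nonneg ω
    have h2 := le_max_left C 1
    have h3 := mul_le_mul_of_nonneg_right (le_max_right C 1) h1
    linarith)⟩ v hv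
  obtain ⟨Q, hprob, hQc, hint, hlow, hup⟩ := exists_measure hPsub hPclosed ℓ hℓ
  have hae : ∀ᵐ ω ∂Q, ω ∈ P := by rw [ae_iff]; exact hQc
  have hQP : Q P = 1 := (prob_compl_eq_zero_iff hPclosed.measurableSet).1 hQc
  have hne : P.Nonempty := by
    rw [nonempty_iff_ne_empty]; rintro rfl; simp at hQP
  have hi : ∀ i, Integrable (fun ω : Path n => ω i) Q := fun i => hint _ (LG_coord i)
  have hsuper : IsSupermartingaleLaw Q := by
    refine supermart_of_cc hi fun j φ hφ h01 => ?_
    have hφc : Continuous fun ω : Path n => φ (restr j ω) := φ.continuous.comp (restr_cont j)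
    have hφb : ∀ ω : Path n, |φ (restr j ω)| ≤ 1 := fun ω => by
      rw [abs_of_nonneg (h01 _).1]; exact (h01 _).2
    let f : LG n := ⟨_, LG_mul_bdd (LG_coord j.succ) hφc 1 hφb⟩
    let g : LG n := ⟨_, LG_mul_bdd (LG_coord j.castSucc) hφc 1 hφb⟩
    have h1 := hlow f fun ω hω => mul_nonneg (h01 _).1 ((hPsub hω).2 _)
    have h2 := hup g (by
      intro ε hε
      obtain ⟨B, hB⟩ := castSucc_bdd hPsub j φ hφ h01
      refine ⟨B, fun ω hω => (hB ω hω).trans ?_⟩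
      have : 0 ≤ ε * ‖ω‖ := by positivity
      linarith)
    have h3 : ℓ (f - g) ≤ 0 := by
      refine hℓ _ _ ?_
      refine (hedge_gain j φ φ.continuous.measurable (fun x => (h01 x).1) 1
        (fun x => (h01 x).2)).mono fun ω hω => ?_
      change φ (restr j ω) * ω j.succ - φ (restr j ω) * ω j.castSucc ≤ _
      rw [mul_sub]
    rw [map_sub] at h3
    have e : ∫ ω, φ (restr j ω) * (ω j.succ - ω j.castSucc) ∂Q
        = ∫ ω, f.1 ω ∂Q - ∫ ω, g.1 ω ∂Q := by
      rw [← integral_sub (hint _ f.2) (hint _ g.2)]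
      refine integral_congr_ae (Eventually.of_forall fun ω => ?_)
      exact mul_sub _ _ _
    rw [e]; linarith
  have hmarg : ∀ i : Fin n, Q.map (fun ω => ω i.succ) = μ i := by
    intro i
    have hmeas : Measurable fun ω : Path n => ω i.succ := by fun_prop
    have : IsProbabilityMeasure (Q.map fun ω : Path n => ω i.succ) :=
      Measure.isProbabilityMeasure_map hmeas.aemeasurable
    have : IsProbabilityMeasure (μ i) := hμ.1 i
    refine measure_eq_of_puts ?_ (hμ.2.1 i) fun K hK => ?_
    · rw [Measure.map_apply hmeas measurableSet_Iio]
      refine measure_mono_null (fun ω hω => ?_) hQc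
      intro hωP
      exact absurd ((hPsub hωP).2 i.succ) (not_le.2 hω)
    · rw [integral_map (measurable_pi_apply _).aemeasurable (by fun_prop), ← hμ.2.2.2 i K hK]
      have hmem : (fun ω : Path n => max (K - ω i.succ) 0) ∈ LG n := by
        refine ⟨by fun_prop, K + 1, fun ω => ?_⟩
        have h1 := norm_le_pi_norm ω i.succ
        rw [Real.norm_eq_abs] at h1
        have h2 := neg_abs_le (ω i.succ)
        rw [abs_of_nonneg (le_max_right _ _)]
        have h3 : 0 ≤ K * ‖ω‖ := by positivity
        exact max_le (by linarith) (by positivity)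
      let f : LG n := ⟨_, hmem⟩
      have hb : ∀ ω ∈ P, f.1 ω ≤ K := fun ω hω =>
        max_le (by linarith [(hPsub hω).2 i.succ]) hK
      have h1 := hup f fun ε hε => ⟨K, fun ω hω => (hb ω hω).trans (by
        have : 0 ≤ ε * ‖ω‖ := by positivity
        linarith)⟩
      have h2 := hlow f fun ω hω => le_max_right _ _
      have h3 : ℓ f ≤ 1 * p i K := hℓ _ _ ((hedge_put 1 i hK).mono fun ω _ => by
        rw [one_mul])
      have h4 : ℓ (-f) ≤ -1 * p i K := hℓ _ _ ((hedge_put (-1) i hK).mono fun ω _ => by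
        change -(max (K - ω i.succ) 0) ≤ _
        rw [neg_one_mul])
      rw [map_neg] at h4
      change ∫ ω, f.1 ω ∂Q = _
      linarith
  refine ⟨Q, ⟨⟨⟨hprob, ?_, hmarg⟩, hsuper⟩, hQP⟩, ?_⟩
  · refine le_antisymm prob_le_one ?_
    rw [← hQP]; exact measure_mono hPsub
  · refine le_eexpE (f := env P G) (F := fun ω => |C| + 1 * ‖ω‖) ?_
      (fun m => (env_mem hne hG zero_le_one le_rfl hC m).1.measurable)
      (fun m => hint _ (env_mem hne hG zero_le_one le_rfl hC m))
      (fun m => Eventually.of_forall fun ω => env_le hne hG zero_le_one le_rfl hC m ω) ?_ ?_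
    · exact (integrable_const _).add ((hint _ (LG_norm n)).const_mul 1)
    · filter_upwards [hae] with ω hω using env_tendsto hG hus zero_le_one le_rfl hC hω
    · intro m
      let f : LG n := ⟨_, env_mem hne hG zero_le_one le_rfl hC m⟩
      refine (hℓv f fun ω hω => env_ge hG zero_le_one le_rfl hC m hω).trans (hup f ?_)
      intro ε hε
      obtain ⟨B, hB⟩ := hsub (min ε 1) (lt_min hε one_pos)
      refine ⟨|B|, fun ω _ => ?_⟩
      refine (env_le hne hG (le_min hε.le zero_le_one) (min_le_right _ _) hB m ω).trans ?_
      have := mul_le_mul_of_nonneg_right (min_le_left ε 1) (norm_nonneg ω)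
      linarith

/-- Corollary 4.4: if the market input admits no WFLVR, `μ_i` are
the measures defined from the put prices, and `G` is upper semi-continuous with
`G_M := G − (s₁+…+s_n)/M` bounded from above for every `M > 1`, then the put-based
superhedging price equals the supremum over calibrated supermartingale models. -/
theorem duality_puts_sublinear
    {n : ℕ} (hn : 1 ≤ n) {s₀ : ℝ} (hs₀ : 0 < s₀)
    (P : Set (Path n)) (hPsub : P ⊆ Omega n s₀) (hPclosed : IsClosed P)
    (p : Fin n → ℝ → ℝ) (μ : Fin n → Measure ℝ) (hμ : PutPricesFrom p μ)
    (hNA : ¬ WFLVR Static.putPayoff p P)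
    (G : (Fin n → ℝ) → EReal) (hGtop : ∀ s, G s ≠ ⊤)
    (hGusc : UpperSemicontinuousOn G {s | ∀ i, 0 ≤ s i})
    (hGM : ∀ M : ℝ, 1 < M → ∃ C : ℝ, ∀ s : Fin n → ℝ, (∀ i, 0 ≤ s i) →
      G s ≤ ((C + (∑ i, s i) / M : ℝ) : EReal)) :
    V Static.putPayoff p P (fun ω => G (tailCoords ω)) =
      ⨆ Q ∈ MSetP s₀ μ P, eexpE Q (fun ω => G (tailCoords ω)) := by
  have hnn : ∀ ω ∈ P, ∀ i, 0 ≤ tailCoords ω i := fun ω hω i => (hPsub hω).2 _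
  refine le_antisymm ?_ ?_
  · refine EReal.ge_of_forall_gt_iff_ge.1 ?_
    intro v hvle
    have key : ∃ Q ∈ MSetP s₀ μ P, (v : EReal) ≤ eexpE Q (fun ω => G (tailCoords ω)) := by
      refine strong_duality hPsub hPclosed hμ (fun ω _ => hGtop _) ?_ ?_ v ?_
      · intro ω hω y hy
        have h1 := hGusc (tailCoords ω) (hnn ω hω) y hy
        have hc : Continuous (tailCoords : Path n → Fin n → ℝ) := by
          unfold tailCoords; fun_prop
        have h2 : Tendsto (tailCoords : Path n → Fin n → ℝ) (𝓝[P] ω)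
            (𝓝[{s | ∀ i, 0 ≤ s i}] (tailCoords ω)) :=
          hc.continuousWithinAt.tendsto_nhdsWithin (fun ω' hω' => hnn ω' hω')
        exact h2.eventually h1
      · intro ε hε
        have hM : (1 : ℝ) < n / ε + 2 := by
          have : (0 : ℝ) ≤ n / ε := by positivity
          linarith
        obtain ⟨C, hC⟩ := hGM _ hM
        refine ⟨C, fun ω hω => (hC _ (hnn ω hω)).trans (EReal.coe_le_coe_iff.2 ?_)⟩
        have h1 : ∑ i, tailCoords ω i ≤ n * ‖ω‖ := by
          calc ∑ i, tailCoords ω i ≤ ∑ _i : Fin n, ‖ω‖ := Finset.sum_le_sum fun i _ =>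
                (le_abs_self _).trans (norm_le_pi_norm ω i.succ)
            _ = n * ‖ω‖ := by simp
        have h2 : (n : ℝ) ≤ ε * (n / ε + 2) := by
          rw [mul_add, mul_div_cancel₀ _ hε.ne']
          linarith
        have h3 : (∑ i, tailCoords ω i) / (n / ε + 2) ≤ ε * ‖ω‖ := by
          rw [div_le_iff₀ (by linarith)]
          have := mul_le_mul_of_nonneg_right h2 (norm_nonneg ω)
          linarith
        linarith
      · rintro f r hf ⟨X, D, hD, rfl, h⟩
        rw [← EReal.coe_le_coe_iff]
        refine hvle.le.trans (sInf_le ⟨X, D, hD, rfl, fun ω hω => (hf ω hω).trans ?_⟩)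
        exact EReal.coe_le_coe_iff.2 (h ω hω)
    obtain ⟨Q, hQ, hvQ⟩ := key
    exact hvQ.trans (le_iSup₂ (f := fun Q (_ : Q ∈ MSetP s₀ μ P) =>
      eexpE Q (fun ω => G (tailCoords ω))) Q hQ)
  · refine iSup₂_le fun Q hQ => le_sInf ?_
    rintro _ ⟨X, D, hD, rfl, h⟩
    exact weak_duality hPsub hPclosed hμ hQ X D hD h

end RobustFin
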